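/- arXiv:1810.05190 — 4 statements merged into one kernel-verified Lean document; each statement's English description precedes it below -/
import Mathlib

section
/- For all natural numbers m, n with m > n+1, Breaker (the second player) has a winning strategy for the (1,1)-crossing game on S_{m×n}. -/
namespace CrossingGames

/-- A vertex of the square integer lattice `ℤ²`. -/
abbrev Vtx : Type := ℤ × ℤ

/-- An edge of the square integer lattice `ℤ²`, encoded as a base vertex together with a
direction: `(v, true)` is the horizontal edge joining `v = (x,y)` to `(x+1,y)`, while
`(v, false)` is the vertical edge joining `v = (x,y)` to `(x,y+1)`. -/
abbrev Edge : Type := Vtx × Bool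

/-- The two endpoints of an edge. -/
def ends (e : Edge) : Vtx × Vtx :=
  (e.1, if e.2 then (e.1.1 + 1, e.1.2) else (e.1.1, e.1.2 + 1))

/-- The edge `e` joins the vertices `u` and `v`. -/
def joins (e : Edge) (u v : Vtx) : Prop :=
  ((ends e).1 = u ∧ (ends e).2 = v) ∨ ((ends e).1 = v ∧ (ends e).2 = u)

/-- The vertex set of the grid `Λ_{m×n}`: all `(x,y) ∈ ℤ²` with `1 ≤ x ≤ m`, `1 ≤ y ≤ n`. -/
def lamVtx (m n : ℕ) : Set Vtx :=
  {v | 1 ≤ v.1 ∧ v.1 ≤ (m : ℤ) ∧ 1 ≤ v.2 ∧ v.2 ≤ (n : ℤ)}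

/-- The edge set of the grid `Λ_{m×n}`: lattice edges with both endpoints in `Λ_{m×n}`. -/
def lamEdges (m n : ℕ) : Set Edge :=
  {e | (ends e).1 ∈ lamVtx m n ∧ (ends e).2 ∈ lamVtx m n}

/-- The edge set of the board `S_{m×n}`: the grid `Λ_{m×n}` with all of its leftmost and
rightmost vertical edges deleted. -/
def sEdges (m n : ℕ) : Set Edge :=
  {e ∈ lamEdges m n | ¬ (e.2 = false ∧ (e.1.1 = 1 ∨ e.1.1 = (m : ℤ)))}

/-- The list of consecutive pairs of a list. -/
def cp {α : Type*} (l : List α) : List (α × α) := l.zip l.tail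

/-- `S` contains all the edges of a left-right crossing path of a board with `m` columns
and `n` rows: a path of edges of `S` joining a vertex `(1,y)` on the left-hand side of the
board to a vertex `(m,y')` on its right-hand side. -/
def HasCrossing (m n : ℕ) (S : Set Edge) : Prop :=
  ∃ l : List Vtx,
    (∃ v, l.head? = some v ∧ v.1 = 1) ∧
    (∃ v, l.getLast? = some v ∧ v.1 = (m : ℤ)) ∧
    (∀ v ∈ l, v ∈ lamVtx m n) ∧
    ∀ p ∈ cp l, ∃ e ∈ S, joins e p.1 p.2

/-- A strategy: given the list of all moves played so far (oldest first), produce the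
next move (a finite set of edges to claim). -/
abbrev Strategy : Type := List (Finset Edge) → Finset Edge

/-- The union of the moves sitting in positions of the given parity of a history
(`true`: positions 0, 2, 4, …; `false`: positions 1, 3, 5, …). -/
def altUnion : Bool → List (Finset Edge) → Finset Edge
  | _, [] => ∅
  | true, mv :: h => mv ∪ altUnion false h
  | false, _ :: h => altUnion true h

/-- All edges claimed by the player moving first (i.e. on even positions) in a history. -/
def firstClaimed (h : List (Finset Edge)) : Finset Edge := altUnion true h

/-- All edges claimed by the player moving second (i.e. on odd positions) in a history. -/
def secondClaimed (h : List (Finset Edge)) : Finset Edge := altUnion false h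

/-- All edges claimed so far in a history. -/
def allClaimed (h : List (Finset Edge)) : Finset Edge := h.foldr (· ∪ ·) ∅

/-- The history of moves (oldest first) after `t` full rounds, when the player moving
first uses strategy `σ` and the player moving second uses strategy `τ`. -/
def hist (σ τ : Strategy) : ℕ → List (Finset Edge)
  | 0 => []
  | t + 1 =>
    let h := hist σ τ t
    h ++ [σ h, τ (h ++ [σ h])]

/-- The move `mv` is legal on `board` after the history `h` for a player of bias `k`: it
consists of as-yet-unclaimed edges of the board, and there are exactly `k` of them, unless
fewer than `k` unclaimed edges remain, in which case the player claims all of them. -/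
def LegalMove (board : Set Edge) (h : List (Finset Edge)) (k : ℕ) (mv : Finset Edge) : Prop :=
  (↑mv : Set Edge) ⊆ board \ ↑(allClaimed h) ∧
    (mv.card = k ∨ (mv.card < k ∧ board \ ↑(allClaimed h) ⊆ (↑mv : Set Edge)))

/-- The player moving first (with bias `p`) always moves legally when playing `σ`
against `τ`. -/
def FirstLegal (board : Set Edge) (p : ℕ) (σ τ : Strategy) : Prop :=
  ∀ t, LegalMove board (hist σ τ t) p (σ (hist σ τ t))

/-- The player moving second (with bias `q`) always moves legally when playing `τ`
against `σ`. -/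
def SecondLegal (board : Set Edge) (q : ℕ) (σ τ : Strategy) : Prop :=
  ∀ t, LegalMove board (hist σ τ t ++ [σ (hist σ τ t)]) q (τ (hist σ τ t ++ [σ (hist σ τ t)]))

/-- Maker (playing first and claiming `p` edges per turn) has a winning strategy for the
Maker–Breaker game on `board` in which Breaker claims `q` edges per turn: she can
guarantee that at some point her claimed edges satisfy the winning condition `win`. -/
def MakerWins (board : Set Edge) (win : Set Edge → Prop) (p q : ℕ) : Prop :=
  ∃ σ : Strategy, ∀ τ : Strategy, SecondLegal board q σ τ →
    FirstLegal board p σ τ ∧ ∃ t, win ↑(firstClaimed (hist σ τ t))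

/-- Breaker (playing second and claiming `q` edges per turn) has a winning strategy for
the Maker–Breaker game on `board` in which Maker claims `p` edges per turn: he can
forever prevent Maker's claimed edges from satisfying the winning condition `win`. -/
def BreakerWins (board : Set Edge) (win : Set Edge → Prop) (p q : ℕ) : Prop :=
  ∃ τ : Strategy, ∀ σ : Strategy, FirstLegal board p σ τ →
    SecondLegal board q σ τ ∧ ∀ t, ¬ win ↑(firstClaimed (hist σ τ t))

/-- Vertices connected to the left side by Maker edges in the upper-left half. -/
inductive LConn (n : ℤ) (MH MV : ℤ → ℤ → Prop) : ℤ → ℤ → Prop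
  | left (y : ℤ) : 1 ≤ y → y ≤ n → LConn n MH MV 1 y
  | right (x y : ℤ) : LConn n MH MV x y → x ≤ y → MH x y → LConn n MH MV (x+1) y
  | back (x y : ℤ) : LConn n MH MV (x+1) y → x ≤ y → MH x y → LConn n MH MV x y
  | up (x y : ℤ) : LConn n MH MV x y → x ≤ y + 1 → MV x y → LConn n MH MV x (y+1)
  | down (x y : ℤ) : LConn n MH MV x (y+1) → x ≤ y + 1 → MV x y → LConn n MH MV x y

theorem LConn.bd {n : ℤ} {MH MV : ℤ → ℤ → Prop}
    (hH : ∀ x y, MH x y → 1 ≤ x ∧ 1 ≤ y ∧ y ≤ n)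
    (hV : ∀ x y, MV x y → 2 ≤ x ∧ 1 ≤ y ∧ y ≤ n - 1) {a b : ℤ} (h : LConn n MH MV a b) :
    1 ≤ a ∧ a ≤ b + 1 ∧ 1 ≤ b ∧ b ≤ n := by
  induction h with
  | left y h1 h2 => omega
  | right x y _ hl hm _ => have := hH _ _ hm; omega
  | back x y _ hl hm _ => have := hH _ _ hm; omega
  | up x y _ hl hm _ => have := hV _ _ hm; omega
  | down x y _ hl hm _ => have := hV _ _ hm; omega

/-- A unit flow from the left side to a vertex. -/
theorem LConn.flow {n : ℤ} {MH MV : ℤ → ℤ → Prop}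
    {a b : ℤ} (h : LConn n MH MV a b) :
    ∃ QH QV : ℤ → ℤ → ℤ,
      (∀ x y, QH x y ≠ 0 → x ≤ y ∧ MH x y ∧ LConn n MH MV x y) ∧
      (∀ x y, QV x y ≠ 0 → x ≤ y + 1 ∧ MV x y ∧ LConn n MH MV x y) ∧
      (∀ x y, 2 ≤ x → QH (x-1) y - QH x y + QV x (y-1) - QV x y
        = if x = a ∧ y = b then 1 else 0) := by
  induction h with
  | left y h1 h2 =>
    refine ⟨fun _ _ => 0, fun _ _ => 0, by simp, by simp, ?_⟩
    intro x y hx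
    rw [if_neg (by omega)]; simp
  | right p q hc hl hm ih =>
    obtain ⟨QH, QV, h1, h2, h3⟩ := ih
    refine ⟨fun x y => QH x y + if x = p ∧ y = q then 1 else 0, QV, ?_, h2, ?_⟩
    · intro x y h
      by_cases hxy : x = p ∧ y = q
      · obtain ⟨rfl, rfl⟩ := hxy; exact ⟨hl, hm, hc⟩
      · simp only [hxy, if_false, add_zero] at h; exact h1 _ _ h
    · intro x y hx
      have := h3 x y hx
      grind
  | back p q hc hl hm ih =>
    obtain ⟨QH, QV, h1, h2, h3⟩ := ih
    refine ⟨fun x y => QH x y - if x = p ∧ y = q then 1 else 0, QV, ?_, h2, ?_⟩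
    · intro x y h
      by_cases hxy : x = p ∧ y = q
      · obtain ⟨rfl, rfl⟩ := hxy; exact ⟨hl, hm, .back _ _ hc hl hm⟩
      · simp only [hxy, if_false, sub_zero] at h; exact h1 _ _ h
    · intro x y hx
      have := h3 x y hx
      grind
  | up p q hc hl hm ih =>
    obtain ⟨QH, QV, h1, h2, h3⟩ := ih
    refine ⟨QH, fun x y => QV x y + if x = p ∧ y = q then 1 else 0, h1, ?_, ?_⟩
    · intro x y h
      by_cases hxy : x = p ∧ y = q
      · obtain ⟨rfl, rfl⟩ := hxy; exact ⟨hl, hm, hc⟩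
      · simp only [hxy, if_false, add_zero] at h; exact h2 _ _ h
    · intro x y hx
      have := h3 x y hx
      grind
  | down p q hc hl hm ih =>
    obtain ⟨QH, QV, h1, h2, h3⟩ := ih
    refine ⟨QH, fun x y => QV x y - if x = p ∧ y = q then 1 else 0, h1, ?_, ?_⟩
    · intro x y h
      by_cases hxy : x = p ∧ y = q
      · obtain ⟨rfl, rfl⟩ := hxy; exact ⟨hl, hm, .down _ _ hc hl hm⟩
      · simp only [hxy, if_false, sub_zero] at h; exact h2 _ _ h
    · intro x y hx
      have := h3 x y hx
      grind

/-- Sum of `f` over `(y, n]`. -/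
noncomputable def upSum (n : ℤ) (f : ℤ → ℤ) (y : ℤ) : ℤ := ∑ i ∈ Finset.Ioc y n, f i

theorem upSum_top (n : ℤ) (f : ℤ → ℤ) : upSum n f n = 0 := by simp [upSum]

theorem upSum_step (n : ℤ) (f : ℤ → ℤ) (y : ℤ) (h : y < n) :
    upSum n f y = f (y+1) + upSum n f (y+1) := by
  have : Finset.Ioc y n = insert (y+1) (Finset.Ioc (y+1) n) := by
    ext i; simp only [Finset.mem_Ioc, Finset.mem_insert]; omega
  unfold upSum
  rw [this, Finset.sum_insert (by simp)]

theorem upSum_zero (n : ℤ) (f : ℤ → ℤ) (y : ℤ) (h : ∀ i, y < i → i ≤ n → f i = 0) :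
    upSum n f y = 0 := by
  apply Finset.sum_eq_zero
  intro i hi
  rw [Finset.mem_Ioc] at hi
  exact h i hi.1 hi.2

/-- The separation theorem behind the reflection strategy. -/
theorem core (n : ℤ) (MH MV : ℤ → ℤ → Prop)
    (hH : ∀ x y, MH x y → 1 ≤ x ∧ 1 ≤ y ∧ y ≤ n)
    (hV : ∀ x y, MV x y → 2 ≤ x ∧ 1 ≤ y ∧ y ≤ n - 1)
    (pH : ∀ x y, x ≤ y → MH x y → ¬ MH (y+1) x)
    (pV : ∀ x y, x ≤ y + 1 → MV x y → ¬ MV (y+2) (x-1)) (hn : 1 ≤ n) :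
    ∃ G : ℤ → ℤ → Prop, (∀ y, 1 ≤ y → y ≤ n → G 1 y) ∧ (∀ x y, G x y → x ≤ n + 1) ∧
      (∀ x y, MH x y → (G x y ↔ G (x+1) y)) ∧ (∀ x y, MV x y → (G x y ↔ G x (y+1))) := by
  have hb : ∀ a b, LConn n MH MV a b → _ := fun a b h => LConn.bd hH hV h
  by_cases hz : ∃ I, LConn n MH MV (I+1) I
  swap
  · push Not at hz
    refine ⟨LConn n MH MV, fun y h1 h2 => .left y h1 h2, fun x y h => by have := hb _ _ h; omega,
      ?_, ?_⟩
    · intro x y hm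
      by_cases hl : x ≤ y
      · exact ⟨fun h => .right _ _ h hl hm, fun h => .back _ _ h hl hm⟩
      · constructor
        · intro h
          have := hb _ _ h
          have e : x = y + 1 := by omega
          subst e; exact absurd h (hz _)
        · intro h
          have := hb _ _ h
          omega
    · intro x y hm
      by_cases hl : x ≤ y + 1
      · exact ⟨fun h => .up _ _ h hl hm, fun h => .down _ _ h hl hm⟩
      · constructor
        · intro h
          have := hb _ _ h
          omega
        · intro h
          have := hb _ _ h
          have e : x = y + 1 + 1 := by omega
          subst e; exact absurd h (hz _)
  obtain ⟨I, hI, hmax⟩ := Int.exists_greatest_of_bdd (P := fun I => LConn n MH MV (I+1) I)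
    ⟨n, fun z h => (hb _ _ h).2.2.2⟩ hz
  have hIb := hb _ _ hI
  obtain ⟨QH, QV, q1, q2, q3⟩ := hI.flow
  -- vanishing facts
  have zH : ∀ x y, ¬ (x ≤ y ∧ MH x y ∧ LConn n MH MV x y) → QH x y = 0 := fun x y h => by
    by_contra h'; exact h (q1 _ _ h')
  have zV : ∀ x y, ¬ (x ≤ y + 1 ∧ MV x y ∧ LConn n MH MV x y) → QV x y = 0 := fun x y h => by
    by_contra h'; exact h (q2 _ _ h')
  let hs : ℤ → ℤ → ℤ := fun x y => upSum n (fun i => QH x i) y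
  let P : ℤ → ℤ → ℤ := fun x y => upSum n (fun i => QV (i+1) (x-2)) (y-1)
  let E : ℤ → ℤ → ℤ := fun x y => if x = I + 1 ∧ y ≤ I then 1 else 0
  let F : ℤ → ℤ → ℤ := fun x y => hs x y - P x y + E x y
  have hs_step : ∀ x y, y < n → hs x y = QH x (y+1) + hs x (y+1) :=
    fun x y h => upSum_step n _ y h
  have P_step : ∀ x y, y ≤ n → P x y = QV (y+1) (x-2) + P x (y+1) := by
    intro x y h
    have := upSum_step n (fun i => QV (i+1) (x-2)) (y-1) (by omega)
    simp only [sub_add_cancel] at this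
    simp only [P, add_sub_cancel_right]
    exact this
  have hs_diff : ∀ x, 1 ≤ x → ∀ y, y ≤ n →
      hs x y - hs (x+1) y = (if x = I ∧ y < I then 1 else 0) - QV (x+1) y := by
    intro x hx y hy
    induction y, hy using Int.leInductionDown with
    | base =>
      have : QV (x+1) n = 0 := zV _ _ (fun h => by have := hV _ _ h.2.1; omega)
      have a : hs x n = 0 := upSum_top n _
      have b : hs (x+1) n = 0 := upSum_top n _
      rw [a, b, this, if_neg (by omega)]; try simp
    | pred y hy ih =>
      have a := hs_step x (y-1) (by omega)
      have b := hs_step (x+1) (y-1) (by omega)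
      have c := q3 (x+1) y (by omega)
      simp only [sub_add_cancel, add_sub_cancel_right] at a b c
      grind
  have P_diff : ∀ x y, 1 ≤ y → y ≤ n + 1 →
      P x y - P (x+1) y = (if x = I + 1 ∧ y ≤ I then 1 else 0) - QH y (x-1) := by
    intro x y hy1 hy
    induction y, hy using Int.leInductionDown with
    | base =>
      have : QH (n+1) (x-1) = 0 := zH _ _ (fun h => by have := hH _ _ h.2.1; omega)
      have a : ∀ x, P x (n+1) = 0 := fun x => upSum_zero _ _ _ (by intros; omega)
      rw [a, a, this, if_neg (by omega)]; try simp
    | pred y hy ih =>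
      have ih := ih (by omega)
      have a := P_step x (y-1) (by omega)
      have b := P_step (x+1) (y-1) (by omega)
      have c := q3 y (x-1) (by omega)
      have e1 : x + 1 - 2 = x - 1 := by ring
      have e2 : x - 1 - 1 = x - 2 := by ring
      rw [e1] at b
      rw [e2] at c
      simp only [sub_add_cancel] at a b
      grind
  have T : ∀ x, x ≤ n + 1 → 1 ≤ x → hs x 0 = if x ≤ I then 1 else 0 := by
    intro x hx
    induction x, hx using Int.leInductionDown with
    | base =>
      intro _
      rw [if_neg (by omega)]
      exact upSum_zero _ _ _ (fun i _ hi => zH _ _ (fun h => by omega))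
    | pred x hx ih =>
      intro h1
      have ih := ih (by omega)
      have a := hs_diff (x-1) h1 0 (by omega)
      have : QV (x-1+1) 0 = 0 := zV _ _ (fun h => by have := hV _ _ h.2.1; omega)
      rw [this] at a
      simp only [sub_add_cancel] at a
      grind
  have hs_low : ∀ x y, 0 ≤ y → y ≤ n → y < x → hs x y = hs x 0 := by
    intro x y hy
    induction y, hy using Int.leInduction with
    | base => intros; rfl
    | succ y hy ih =>
      intro h1 h2
      have := hs_step x y (by omega)
      have : QH x (y+1) = 0 := zH _ _ (fun h => by omega)
      have := ih (by omega) (by omega)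
      omega
  have Fz : ∀ j, LConn n MH MV (j+1) j → F (j+1) j = 1 := by
    intro j hj
    have hjI := hmax j hj
    have hjb := hb _ _ hj
    have a := hs_low (j+1) j (by omega) (by omega) (by omega)
    have b := T (j+1) (by omega) (by omega)
    have c : P (j+1) j = 0 := upSum_zero _ _ _ (fun i h1 h2 => zV _ _ (fun h => by omega))
    simp only [F, E, a, b, c]
    grind
  have Fr : ∀ y, 1 ≤ y → F (n+2) y = 0 := by
    intro y hy
    have a : hs (n+2) y = 0 := upSum_zero _ _ _ (fun i h1 h2 => zH _ _ (fun h => by omega))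
    have c : P (n+2) y = 0 := upSum_zero _ _ _ (fun i h1 h2 => zV _ _ (fun h => by
      have := hV _ _ h.2.1; omega))
    simp only [F, E, a, c]
    rw [if_neg (by omega)]; simp
  have FH : ∀ x y, MH x y → (x ≤ y → ¬ LConn n MH MV (x+1) y) → F x y = F (x+1) y := by
    intro x y hm hc
    have hmb := hH _ _ hm
    have a := hs_diff x hmb.1 y hmb.2.2
    have b := P_diff x y hmb.2.1 (by omega)
    have k : QH y (x-1) = 0 := zH _ _ (fun h => pH _ _ h.1 h.2.1 (by simpa using hm))
    have l : QV (x+1) y = 0 := zV _ _ (fun h => hc (by omega) h.2.2)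
    have z : ¬ (x = I ∧ y = I) := by
      rintro ⟨rfl, rfl⟩
      exact hc le_rfl hI
    simp only [F, E]
    grind
  have FV : ∀ x y, MV x y → (x ≤ y + 1 → ¬ LConn n MH MV x (y+1) ∧ ¬ LConn n MH MV x y) →
      F x y = F x (y+1) := by
    intro x y hm hc
    have hmb := hV _ _ hm
    have a := hs_step x y (by omega)
    have b := P_step x y (by omega)
    have k : QV (y+1) (x-2) = 0 := zV _ _ (fun h => pV _ _ h.1 h.2.1 (by
      have e1 : x - 2 + 2 = x := by ring
      have e2 : y + 1 - 1 = y := by ring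
      rw [e1, e2]; exact hm))
    have l : QH x (y+1) = 0 := zH _ _ (fun h => (hc (by omega)).1 h.2.2)
    have z : ¬ (x = I + 1 ∧ y = I) := by
      rintro ⟨rfl, rfl⟩
      exact (hc le_rfl).2 hI
    simp only [F, E]
    grind
  refine ⟨fun x y => x ≤ n + 1 ∧ (LConn n MH MV x y ∨ F x y = 1), ?_, fun x y h => h.1, ?_, ?_⟩
  · intro y h1 h2
    exact ⟨by omega, Or.inl (.left y h1 h2)⟩
  · intro x y hm
    have hmb := hH _ _ hm
    beta_reduce
    by_cases hl : x ≤ y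
    · have hiff : LConn n MH MV x y ↔ LConn n MH MV (x+1) y :=
        ⟨fun h => .right _ _ h hl hm, fun h => .back _ _ h hl hm⟩
      by_cases hc : LConn n MH MV x y
      · have := hb _ _ (hiff.1 hc)
        exact ⟨fun h => ⟨by omega, Or.inl (hiff.1 hc)⟩, fun h => ⟨by omega, Or.inl hc⟩⟩
      · have e := FH x y hm (fun _ h => hc (hiff.2 h))
        rw [← hiff, ← e]
        constructor
        · intro h; exact ⟨by omega, h.2⟩
        · intro h; exact ⟨by omega, h.2⟩
    · have e := FH x y hm (fun h => absurd h hl)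
      have hc2 : ¬ LConn n MH MV (x+1) y := fun h => by have := hb _ _ h; omega
      have hc1 : LConn n MH MV x y → F x y = 1 := by
        intro h
        have := hb _ _ h
        have e : x = y + 1 := by omega
        subst e; exact Fz _ h
      have h3 : (LConn n MH MV x y ∨ F x y = 1) ↔ F x y = 1 :=
        ⟨fun h => h.elim hc1 id, Or.inr⟩
      rw [h3, e]
      constructor
      · rintro ⟨h1, h2⟩
        refine ⟨?_, Or.inr h2⟩
        by_contra h4
        have e2 : x + 1 = n + 2 := by omega
        rw [e2, Fr y hmb.2.1] at h2
        omega
      · rintro ⟨h1, h2⟩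
        exact ⟨by omega, h2.resolve_left hc2⟩
  · intro x y hm
    have hmb := hV _ _ hm
    refine and_congr_right (fun hx => ?_)
    by_cases hl : x ≤ y + 1
    · have hiff : LConn n MH MV x y ↔ LConn n MH MV x (y+1) :=
        ⟨fun h => .up _ _ h hl hm, fun h => .down _ _ h hl hm⟩
      by_cases hc : LConn n MH MV x y
      · exact ⟨fun h => Or.inl (hiff.1 hc), fun h => Or.inl hc⟩
      · have e := FV x y hm (fun _ => ⟨fun h => hc (hiff.2 h), hc⟩)
        rw [← hiff, ← e]
    · have e := FV x y hm (fun h => absurd h hl)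
      have hc1 : ¬ LConn n MH MV x y := fun h => by have := hb _ _ h; omega
      have hc2 : LConn n MH MV x (y+1) → F x (y+1) = 1 := by
        intro h
        have := hb _ _ h
        have e : x = y + 1 + 1 := by omega
        subst e; exact Fz _ h
      rw [e]
      exact ⟨fun h => h.elim (fun h => absurd h hc1) Or.inr, fun h => h.elim (fun h => Or.inr (hc2 h)) Or.inr⟩

/-- The reflection pairing. -/
def partner (e : Edge) : Edge :=
  if e.2 = true then
    (if e.1.1 ≤ e.1.2 then ((e.1.2 + 1, e.1.1), true) else ((e.1.2, e.1.1 - 1), true))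
  else
    (if e.1.1 ≤ e.1.2 + 1 then ((e.1.2 + 2, e.1.1 - 1), false)
      else ((e.1.2 + 1, e.1.1 - 2), false))

/-- The edges of the sub-board on which the pairing is defined. -/
def coreSet (n : ℕ) : Set Edge :=
  {e | (e.2 = true ∧ 1 ≤ e.1.1 ∧ e.1.1 ≤ n + 1 ∧ 1 ≤ e.1.2 ∧ e.1.2 ≤ n) ∨
    (e.2 = false ∧ 2 ≤ e.1.1 ∧ e.1.1 ≤ n + 1 ∧ 1 ≤ e.1.2 ∧ e.1.2 + 1 ≤ n)}

theorem partner_partner (e : Edge) : partner (partner e) = e := by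
  obtain ⟨⟨x, y⟩, b⟩ := e
  cases b <;> simp only [partner] <;> split_ifs <;> grind

theorem partner_ne (e : Edge) : partner e ≠ e := by
  obtain ⟨⟨x, y⟩, b⟩ := e
  cases b <;> simp only [partner] <;> split_ifs <;> grind

theorem partner_core (n : ℕ) (e : Edge) (h : e ∈ coreSet n) : partner e ∈ coreSet n := by
  obtain ⟨⟨x, y⟩, b⟩ := e
  simp only [coreSet, Set.mem_ofPred_eq] at h ⊢
  cases b <;> simp only [partner] <;> split_ifs <;> grind

theorem mem_sEdges_H (m n : ℕ) (x y : ℤ) :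
    ((x, y), true) ∈ sEdges m n ↔ 1 ≤ x ∧ x + 1 ≤ m ∧ 1 ≤ y ∧ y ≤ n := by
  simp only [sEdges, lamEdges, lamVtx, ends, Set.mem_ofPred_eq]
  grind

theorem mem_sEdges_V (m n : ℕ) (x y : ℤ) :
    ((x, y), false) ∈ sEdges m n ↔ 2 ≤ x ∧ x + 1 ≤ m ∧ 1 ≤ y ∧ y + 1 ≤ n := by
  simp only [sEdges, lamEdges, lamVtx, ends, Set.mem_ofPred_eq]
  grind

theorem coreSet_sub (m n : ℕ) (hm : n + 1 < m) : coreSet n ⊆ sEdges m n := by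
  rintro ⟨⟨x, y⟩, b⟩ h
  simp only [coreSet, Set.mem_ofPred_eq] at h
  cases b
  · rw [mem_sEdges_V]; grind
  · rw [mem_sEdges_H]; grind

theorem list_invariant (G : Vtx → Prop) (S : Set Edge)
    (hG : ∀ e ∈ S, ∀ u v, joins e u v → G u → G v) :
    ∀ l : List Vtx, (∀ p ∈ cp l, ∃ e ∈ S, joins e p.1 p.2) →
      (∀ v, l.head? = some v → G v) → ∀ v ∈ l, G v := by
  intro l
  induction l with
  | nil => intro _ _ v hv; simp at hv
  | cons a l ih =>
    intro hp hh v hv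
    have ha : G a := hh a rfl
    rcases List.mem_cons.1 hv with rfl | hv
    · exact ha
    refine ih ?_ ?_ v hv
    · intro p hpm
      apply hp
      cases l with
      | nil => simp at hv
      | cons b l => 
        simp only [cp, List.tail_cons, List.zip_cons_cons, List.mem_cons] at hpm ⊢
        exact Or.inr hpm
    · intro w hw
      cases l with
      | nil => simp at hv
      | cons b l =>
        simp only [List.head?_cons, Option.some.injEq] at hw
        subst hw
        obtain ⟨e, he, hj⟩ := hp (a, b) (by simp [cp])
        exact hG e he _ _ hj ha

theorem no_crossing (m n : ℕ) (hn : 1 ≤ n) (hm : n + 1 < m) (S : Set Edge)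
    (hS : S ⊆ sEdges m n) (hp : ∀ e ∈ S, e ∈ coreSet n → partner e ∉ S) :
    ¬ HasCrossing m n S := by
  rintro ⟨l, ⟨v, hv, hv1⟩, ⟨w, hw, hw1⟩, hl, hc⟩
  obtain ⟨G, g1, g2, g3, g4⟩ := core (n : ℤ) (fun x y => ((x, y), true) ∈ S)
    (fun x y => ((x, y), false) ∈ S)
    (fun x y h => by have := (mem_sEdges_H _ _ _ _).1 (hS h); omega)
    (fun x y h => by have := (mem_sEdges_V _ _ _ _).1 (hS h); omega)
    (fun x y hxy h h' => by
      have a := (mem_sEdges_H _ _ _ _).1 (hS h)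
      refine hp _ h ?_ ?_
      · exact Or.inl ⟨rfl, by dsimp only; omega⟩
      · simpa [partner, hxy] using h')
    (fun x y hxy h h' => by
      have a := (mem_sEdges_V _ _ _ _).1 (hS h)
      refine hp _ h ?_ ?_
      · exact Or.inr ⟨rfl, by dsimp only; omega⟩
      · simpa [partner, hxy] using h') (by omega)
  have inv := list_invariant (fun v => G v.1 v.2) S ?_ l hc ?_ w (List.mem_of_getLast? hw)
  · have := g2 _ _ inv
    omega
  · rintro ⟨⟨x, y⟩, b⟩ he u v hj hu
    cases b
    · have := g4 x y he
      rcases hj with ⟨rfl, rfl⟩ | ⟨rfl, rfl⟩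
      · simpa [ends] using this.1 (by simpa [ends] using hu)
      · simpa [ends] using this.2 (by simpa [ends] using hu)
    · have := g3 x y he
      rcases hj with ⟨rfl, rfl⟩ | ⟨rfl, rfl⟩
      · simpa [ends] using this.1 (by simpa [ends] using hu)
      · simpa [ends] using this.2 (by simpa [ends] using hu)
  · intro v' hv'
    rw [hv] at hv'
    obtain rfl := Option.some.inj hv'
    have := hl v (List.mem_of_head? hv)
    have h2 := g1 v.2 this.2.2.1 this.2.2.2
    beta_reduce
    rw [hv1]; exact h2

open Classical in
/-- Breaker's pairing strategy. -/
noncomputable def reflStrat (board : Set Edge) (n : ℕ) : Strategy := fun h =>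
  if H : ∃ e, (∃ mv, h.getLast? = some mv ∧ e ∈ mv) ∧ e ∈ coreSet n ∧
      partner e ∈ board \ ↑(allClaimed h) then {partner H.choose}
  else if H : ∃ e, e ∈ board \ ↑(allClaimed h) then {H.choose} else ∅

theorem reflStrat_legal (board : Set Edge) (n : ℕ) (h : List (Finset Edge)) :
    LegalMove board h 1 (reflStrat board n h) := by
  unfold reflStrat
  split_ifs with H1 H2
  · refine ⟨?_, Or.inl (by simp)⟩
    simpa using H1.choose_spec.2.2
  · refine ⟨?_, Or.inl (by simp)⟩
    simpa using H2.choose_spec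
  · refine ⟨by simp, Or.inr ⟨by simp, ?_⟩⟩
    intro e he
    exact absurd ⟨e, he⟩ H2

theorem reflStrat_partner (board : Set Edge) (n : ℕ) (h : List (Finset Edge)) (mv : Finset Edge)
    (hmv : mv.card ≤ 1) (e : Edge) (he : e ∈ mv) (hc : e ∈ coreSet n)
    (hp : partner e ∈ board \ ↑(allClaimed (h ++ [mv]))) :
    partner e ∈ reflStrat board n (h ++ [mv]) := by
  have H : ∃ e, (∃ mv', (h ++ [mv]).getLast? = some mv' ∧ e ∈ mv') ∧ e ∈ coreSet n ∧
      partner e ∈ board \ ↑(allClaimed (h ++ [mv])) := ⟨e, ⟨mv, by simp, he⟩, hc, hp⟩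
  unfold reflStrat
  rw [dif_pos H]
  obtain ⟨⟨mv', h1, h2⟩, -⟩ := H.choose_spec
  have h3 : mv = mv' := by simpa using h1
  subst h3
  rw [Finset.card_le_one.1 hmv e he _ h2]
  simp

theorem altUnion_hist (σ τ : Strategy) (b : Bool) (t : ℕ) : ∀ l,
    altUnion b (hist σ τ t ++ l) = altUnion b (hist σ τ t) ∪ altUnion b l := by
  induction t with
  | zero => intro l; cases b <;> simp [hist, altUnion]
  | succ t ih =>
    intro l
    simp only [hist, List.append_assoc, List.cons_append, List.nil_append]
    rw [ih, ih]
    cases b <;> simp [altUnion, Finset.union_assoc]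

theorem allClaimed_append (h l : List (Finset Edge)) :
    allClaimed (h ++ l) = allClaimed h ∪ allClaimed l := by
  induction h with
  | nil => simp [allClaimed]
  | cons a h ih => simp only [allClaimed, List.cons_append, List.foldr_cons] at *; rw [ih]; simp [Finset.union_assoc]

theorem game_invariant (m n : ℕ) (hm : n + 1 < m) (σ : Strategy)
    (hσ : FirstLegal (sEdges m n) 1 σ (reflStrat (sEdges m n) n)) (t : ℕ) :
    let h := hist σ (reflStrat (sEdges m n) n) t
    allClaimed h = firstClaimed h ∪ secondClaimed h ∧
    (∀ e ∈ firstClaimed h, e ∈ sEdges m n) ∧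
    (∀ e ∈ firstClaimed h, e ∉ secondClaimed h) ∧
    (∀ e ∈ firstClaimed h, e ∈ coreSet n → partner e ∈ secondClaimed h) := by
  induction t with
  | zero => simp [hist, allClaimed, firstClaimed, secondClaimed, altUnion]
  | succ t ih =>
    obtain ⟨i1, i2, i3, i4⟩ := ih
    have hl := hσ t
    have e1 : hist σ (reflStrat (sEdges m n) n) (t+1) = hist σ (reflStrat (sEdges m n) n) t ++
      [σ (hist σ (reflStrat (sEdges m n) n) t), reflStrat (sEdges m n) n
        (hist σ (reflStrat (sEdges m n) n) t ++ [σ (hist σ (reflStrat (sEdges m n) n) t)])] := rfl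
    have f1 : ∀ l, firstClaimed (hist σ (reflStrat (sEdges m n) n) t ++ l) = _ :=
      fun l => altUnion_hist _ _ true t l
    have f2 : ∀ l, secondClaimed (hist σ (reflStrat (sEdges m n) n) t ++ l) = _ :=
      fun l => altUnion_hist _ _ false t l
    dsimp only
    rw [e1, f1, f2, allClaimed_append]
    change allClaimed _ ∪ _ = (firstClaimed _ ∪ _) ∪ (secondClaimed _ ∪ _) ∧
      (∀ e ∈ firstClaimed _ ∪ _, _) ∧ (∀ e ∈ firstClaimed _ ∪ _, e ∉ secondClaimed _ ∪ _) ∧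
      (∀ e ∈ firstClaimed _ ∪ _, _ → _ ∈ secondClaimed _ ∪ _)
    generalize hist σ (reflStrat (sEdges m n) n) t = h at *
    generalize σ h = mv at *
    have hb := reflStrat_legal (sEdges m n) n (h ++ [mv])
    have hpart := reflStrat_partner (sEdges m n) n h mv (by
      rcases hl.2 with h | h
      · omega
      · omega)
    generalize reflStrat (sEdges m n) n (h ++ [mv]) = bm at *
    have hl1 : ∀ e ∈ mv, e ∈ sEdges m n ∧ e ∉ allClaimed h := fun e he => by
      simpa using hl.1 (Finset.mem_coe.2 he)
    have ha : allClaimed (h ++ [mv]) = allClaimed h ∪ mv := by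
      rw [allClaimed_append]; simp [allClaimed]
    have hb1 : ∀ e ∈ bm, e ∈ sEdges m n ∧ e ∉ allClaimed h ∧ e ∉ mv := fun e he => by
      have := hb.1 (Finset.mem_coe.2 he)
      rw [ha] at this
      simpa using this
    rw [ha] at hpart
    simp only [altUnion, allClaimed, List.foldr_cons, List.foldr_nil, Finset.union_empty] at *
    simp only [i1, Finset.mem_union, not_or] at *
    refine ⟨?_, ?_, ?_, ?_⟩
    · ext e; simp only [Finset.mem_union]; tauto
    · rintro e (he | he)
      · exact i2 e he
      · exact (hl1 e he).1
    · rintro e (he | he)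
      · exact ⟨i3 e he, fun h' => (hb1 e h').2.1.1 he⟩
      · exact ⟨(hl1 e he).2.2, fun h' => (hb1 e h').2.2 he⟩
    · rintro e (he | he) hc
      · exact Or.inl (i4 e he hc)
      · by_cases hs : partner e ∈ secondClaimed h
        · exact Or.inl hs
        right
        refine hpart e he hc ⟨coreSet_sub m n hm (partner_core n e hc), ?_⟩
        simp only [Finset.coe_union, Set.mem_union, Finset.mem_coe, not_or]
        refine ⟨⟨fun hf => ?_, hs⟩, fun hf => ?_⟩
        · have := i4 _ hf (partner_core n e hc)
          rw [partner_partner] at this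
          exact (hl1 e he).2.2 this
        · refine partner_ne e (Finset.card_le_one.1 ?_ _ hf _ he)
          rcases hl.2 with h | h
          · omega
          · omega

/-- **Reflection strategy.** For all (positive) natural numbers `m, n` with `m > n + 1`,
Breaker (the second player) has a winning strategy for the `(1,1)`-crossing game
(Bridg-it) on `S_{m×n}`. -/
theorem breaker_wins_bridgit_on_long_board
    (m n : ℕ) (hn : 1 ≤ n) (hm : n + 1 < m) :
    BreakerWins (sEdges m n) (HasCrossing m n) 1 1 := by
  refine ⟨reflStrat (sEdges m n) n, fun σ hσ => ⟨fun t => reflStrat_legal _ _ _, fun t => ?_⟩⟩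
  obtain ⟨-, h2, h3, h4⟩ := game_invariant m n hm σ hσ t
  refine no_crossing m n hn hm _ (fun e he => h2 e he) ?_
  intro e he hc hp
  exact h3 _ (Finset.mem_coe.1 hp) (h4 e (Finset.mem_coe.1 he) hc)

end CrossingGames
end

section
/- For all natural numbers m ≥ 2 and n ≥ 1, the dual graph S*_{m×n} is isomorphic (as a graph) to S_{(n+1)×(m−1)}, via a rotation and translation of the plane. In particular, S_{(n+1)×n} is self-dual: it is isomorphic to its own dual graph. -/
namespace CrossingGames

/-- A dual vertex: `(a,b) : ℤ × ℤ` encodes the dual vertex `(a + 0.5, b + 0.5)` of the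
dual lattice `ℤ² + (0.5, 0.5)`. Dual edges are encoded like lattice edges, in these
shifted coordinates. -/
abbrev DVtx : Type := Vtx

/-- The dual edge `e*` of a lattice edge `e`: the unique edge of the dual lattice
crossing `e` (i.e. having the same midpoint). The horizontal edge `(x+0.5, y)` has the
vertical dual edge joining `(x+0.5, y−0.5)` to `(x+0.5, y+0.5)`, and the vertical edge
`(x, y+0.5)` has the horizontal dual edge joining `(x−0.5, y+0.5)` to `(x+0.5, y+0.5)`,
expressed here in the shifted integer coordinates. -/
def dualEdge (e : Edge) : Edge :=
  if e.2 then ((e.1.1, e.1.2 - 1), false) else ((e.1.1 - 1, e.1.2), true)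

/-- `D` (a set of dual edges) contains all the dual edges of a top-bottom crossing dual
path of a board of width `n`: a dual path joining a dual vertex with second coordinate
`n + 0.5` (encoded `n`) to a dual vertex with second coordinate `0.5` (encoded `0`). -/
def HasDualCrossing (n : ℕ) (D : Set Edge) : Prop :=
  ∃ l : List DVtx,
    (∃ v, l.head? = some v ∧ v.2 = (n : ℤ)) ∧
    (∃ v, l.getLast? = some v ∧ v.2 = 0) ∧
    ∀ p ∈ cp l, ∃ d ∈ D, joins d p.1 p.2

/-- The plane rotation-and-translation used to identify `S*_{m×n}` with
`S_{(n+1)×(m−1)}`: in shifted integer coordinates it sends the dual vertex `(a, b)`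
(i.e. the point `(a + 0.5, b + 0.5)`) to the vertex `(n + 1 − b, a)`; as a map of the
plane it is the composition of the rotation `(u,w) ↦ (−w,u)` by 90° with the
translation by `(n + 1.5, −0.5)`. -/
def rotVtx (n : ℕ) (v : DVtx) : Vtx := ((n : ℤ) + 1 - v.2, v.1)

/-- The induced map on (dual) edges of the rotation-and-translation `rotVtx`. -/
def rotEdge (n : ℕ) (d : Edge) : Edge :=
  if d.2 then (((n : ℤ) + 1 - d.1.2, d.1.1), false) else (((n : ℤ) - d.1.2, d.1.1), true)

theorem mem_sEdges_iff (m n : ℕ) (x y : ℤ) (b : Bool) :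
    ((x, y), b) ∈ sEdges m n ↔
      (b = true ∧ 1 ≤ x ∧ x + 1 ≤ m ∧ 1 ≤ y ∧ y ≤ n) ∨
      (b = false ∧ 2 ≤ x ∧ x + 1 ≤ m ∧ 1 ≤ y ∧ y + 1 ≤ n) := by
  cases b <;> simp [sEdges, lamEdges, lamVtx, ends] <;> omega

theorem rot_injective (n : ℕ) : Function.Injective (rotEdge n) := by
  rintro ⟨⟨a, b⟩, c⟩ ⟨⟨a', b'⟩, c'⟩ h
  cases c <;> cases c' <;> simp [rotEdge] at h ⊢ <;> omega

theorem bijOn_aux (m k n : ℕ) (hk : m = k + 1) :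
    Set.BijOn (rotEdge n) (dualEdge '' sEdges m n) (sEdges (n + 1) k) := by
  subst hk
  refine ⟨?_, (rot_injective n).injOn, ?_⟩
  · rintro _ ⟨⟨⟨x, y⟩, b⟩, h, rfl⟩
    rw [mem_sEdges_iff] at h
    cases b <;> simp [dualEdge, rotEdge, mem_sEdges_iff] at h ⊢ <;> omega
  · rintro ⟨⟨x, y⟩, b⟩ h
    rw [mem_sEdges_iff] at h
    cases b
    · refine ⟨_, ⟨((y + 1, n + 1 - x), false), ?_, rfl⟩, ?_⟩
      · rw [mem_sEdges_iff]; simp at h ⊢; omega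
      · simp [dualEdge, rotEdge]
    · refine ⟨_, ⟨((y, n + 1 - x), true), ?_, rfl⟩, ?_⟩
      · rw [mem_sEdges_iff]; simp at h ⊢; omega
      · simp [dualEdge, rotEdge]; omega

/-- **Duality of the boards.** For `m ≥ 2` and `n ≥ 1`, the dual graph `S*_{m×n}` is
isomorphic, via the rotation-and-translation `rotVtx`, to `S_{(n+1)×(m−1)}`: the induced
edge map is a bijection from the dual edges of `S_{m×n}` onto the edges of
`S_{(n+1)×(m−1)}`, and it is compatible with `rotVtx` on endpoints (so it preserves
incidence). In particular (taking `m = n + 1`), the board `S_{(n+1)×n}` is self-dual: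
it is isomorphic to its own dual graph. -/
theorem dual_board_iso (m n : ℕ) (hm : 2 ≤ m) (hn : 1 ≤ n) :
    Set.BijOn (rotEdge n) (dualEdge '' sEdges m n) (sEdges (n + 1) (m - 1)) ∧
    (∀ d : Edge,
      (rotVtx n (ends d).1 = (ends (rotEdge n d)).1 ∧
        rotVtx n (ends d).2 = (ends (rotEdge n d)).2) ∨
      (rotVtx n (ends d).1 = (ends (rotEdge n d)).2 ∧
        rotVtx n (ends d).2 = (ends (rotEdge n d)).1)) ∧
    Set.BijOn (rotEdge n) (dualEdge '' sEdges (n + 1) n) (sEdges (n + 1) n) := by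
  refine ⟨bijOn_aux m (m - 1) n (by omega), ?_, bijOn_aux (n + 1) n n rfl⟩
  rintro ⟨⟨a, b⟩, c⟩
  cases c
  · right
    simp [rotVtx, rotEdge, ends]
    omega
  · left
    simp [rotVtx, rotEdge, ends]

end CrossingGames
end

section
/- Let (G,A,B) be a Shannon game-triple and let p, q, l, T, m be natural numbers. Assume that: (i) the edge set E(G) is partitioned into m pairwise edge-disjoint strips S₁,…,S_m; (ii) for each i there is a local Shannon game-triple (Gᵢ,Aᵢ,Bᵢ) with E(Gᵢ) ⊆ Sᵢ such that any set of Breaker edges defeating Maker in the local game defeats her globally, i.e. for every set E' ⊆ E(Gᵢ), if Gᵢ − E' contains no Aᵢ–Bᵢ crossing path then G − E' contains no A–B crossing path; (iii) for each i, Breaker has a winning strategy for the (p,q)-Shannon switching game on (Gᵢ,Aᵢ,Bᵢ) under the Breaker-First rule that ensures his victory within at most T of his turns. Set s = l(p+q+1) − 1. If m ≥ (s(p+1))^T + l(p+1) − 1, then Breaker has a winning strategy for the (l(p+1)−1, lq)-Shannon switching game on (G,A,B). -/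
namespace ShannonStrips

variable {V E : Type}

/-- `u` is joined to `v` by a walk using only edges from `F`, in the multigraph with
edge-endpoint map `ends`. -/
def Reach (ends : E → V × V) (F : Set E) (u v : V) : Prop :=
  Relation.ReflTransGen
    (fun a b => ∃ e ∈ F,
      ((ends e).1 = a ∧ (ends e).2 = b) ∨ ((ends e).1 = b ∧ (ends e).2 = a)) u v

/-- The edge set `F` contains all the edges of an `A`–`B` crossing path: a path from some
vertex of `A` to some vertex of `B`. -/
def CrossWin (ends : E → V × V) (A B : Set V) (F : Set E) : Prop :=
  ∃ a ∈ A, ∃ b ∈ B, Reach ends F a b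

/-- A strategy: given the list of all moves played so far (oldest first), produce the
next move (a finite set of edges to claim). -/
abbrev Strat (E : Type) : Type := List (Finset E) → Finset E

variable [DecidableEq E]

/-- The union of the moves sitting in positions of the given parity of a history
(`true`: positions 0, 2, 4, …; `false`: positions 1, 3, 5, …). -/
def altUnion : Bool → List (Finset E) → Finset E
  | _, [] => ∅
  | true, mv :: h => mv ∪ altUnion false h
  | false, _ :: h => altUnion true h

/-- All edges claimed by the player moving first in a history. -/
def firstClaimed (h : List (Finset E)) : Finset E := altUnion true h

/-- All edges claimed by the player moving second in a history. -/
def secondClaimed (h : List (Finset E)) : Finset E := altUnion false h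

/-- All edges claimed so far in a history. -/
def allClaimed (h : List (Finset E)) : Finset E := h.foldr (· ∪ ·) ∅

/-- The history of moves (oldest first) after `t` full rounds, when the player moving
first uses strategy `σ` and the player moving second uses strategy `τ`. -/
def hist (σ τ : Strat E) : ℕ → List (Finset E)
  | 0 => []
  | t + 1 =>
    let h := hist σ τ t
    h ++ [σ h, τ (h ++ [σ h])]

/-- The move `mv` is legal on `board` after the history `h` for a player of bias `k`: it
consists of as-yet-unclaimed edges of the board, exactly `k` of them unless fewer than
`k` unclaimed edges remain, in which case the player claims all of them. -/
def LegalMove (board : Set E) (h : List (Finset E)) (k : ℕ) (mv : Finset E) : Prop :=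
  (↑mv : Set E) ⊆ board \ ↑(allClaimed h) ∧
    (mv.card = k ∨ (mv.card < k ∧ board \ ↑(allClaimed h) ⊆ (↑mv : Set E)))

/-- The player moving first (with bias `k`) always moves legally when playing `σ`
against `τ`. -/
def FirstLegal (board : Set E) (k : ℕ) (σ τ : Strat E) : Prop :=
  ∀ t, LegalMove board (hist σ τ t) k (σ (hist σ τ t))

/-- The player moving second (with bias `k`) always moves legally when playing `τ`
against `σ`. -/
def SecondLegal (board : Set E) (k : ℕ) (σ τ : Strat E) : Prop :=
  ∀ t, LegalMove board (hist σ τ t ++ [σ (hist σ τ t)]) k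
    (τ (hist σ τ t ++ [σ (hist σ τ t)]))

/-- Breaker has a winning strategy for the `(p,q)`-Shannon switching game on the board
`board` with distinguished vertex sets `A`, `B` (Maker, moving first, claims `p` edges
per turn aiming to complete an `A`–`B` crossing path; Breaker claims `q` edges per
turn): Breaker can forever prevent Maker's claimed edges from containing an `A`–`B`
crossing path. -/
def BreakerWinsShannon (ends : E → V × V) (board : Set E) (A B : Set V) (p q : ℕ) : Prop :=
  ∃ τ : Strat E, ∀ σ : Strat E, FirstLegal board p σ τ →
    SecondLegal board q σ τ ∧
      ∀ t, ¬ CrossWin ends A B (↑(firstClaimed (hist σ τ t)) : Set E)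

/-- Breaker has a winning strategy for the `(p,q)`-Shannon switching game on `board`
with distinguished sets `A`, `B`, played under the Breaker-First rule (Breaker makes the
first move), which moreover ensures his victory within at most `T` of his turns: Maker
never completes an `A`–`B` crossing path, and after Breaker's first `T` turns every
`A`–`B` crossing path of the board contains a Breaker edge. -/
def BreakerWinsShannonBFWithin (ends : E → V × V) (board : Set E) (A B : Set V)
    (p q T : ℕ) : Prop :=
  ∃ τ : Strat E, ∀ σ : Strat E, SecondLegal board p τ σ →
    FirstLegal board q τ σ ∧
    (∀ t, ¬ CrossWin ends A B (↑(secondClaimed (hist τ σ t)) : Set E)) ∧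
    ¬ CrossWin ends A B (board \ ↑(firstClaimed (hist τ σ T)))


section Aux
variable {V E : Type} [DecidableEq E]

def Leg (board : Set E) (C : Finset E) (k : ℕ) (mv : Finset E) : Prop :=
  (↑mv : Set E) ⊆ board \ ↑C ∧
    (mv.card = k ∨ (mv.card < k ∧ board \ ↑C ⊆ (↑mv : Set E)))

theorem allClaimed_eq (h : List (Finset E)) :
    allClaimed h = altUnion true h ∪ altUnion false h := by
  induction h with
  | nil => simp [allClaimed, altUnion]
  | cons a h ih =>
    have : allClaimed (a :: h) = a ∪ allClaimed h := rfl
    rw [this, ih]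
    simp only [altUnion]
    ext e; simp only [Finset.mem_union]; tauto

theorem altUnion_append (h g : List (Finset E)) : ∀ b,
    altUnion b (h ++ g) = altUnion b h ∪ altUnion (Nat.bodd h.length ^^ b) g := by
  induction h with
  | nil => intro b; simp [altUnion]
  | cons a h ih =>
    intro b
    cases b <;> simp [altUnion, ih, Nat.bodd_succ, Finset.union_assoc]

theorem hist_length (σ τ : Strat E) (t : ℕ) : (hist σ τ t).length = 2 * t := by
  induction t with
  | zero => rfl
  | succ t ih => simp [hist, ih]; ring

theorem bodd_hist (σ τ : Strat E) (t : ℕ) : Nat.bodd (hist σ τ t).length = false := by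
  rw [hist_length]; simp

theorem first_half (σ τ : Strat E) (t : ℕ) (a : Finset E) :
    firstClaimed (hist σ τ t ++ [a]) = firstClaimed (hist σ τ t) ∪ a := by
  simp [firstClaimed, altUnion_append, bodd_hist, altUnion]

theorem second_half (σ τ : Strat E) (t : ℕ) (a : Finset E) :
    secondClaimed (hist σ τ t ++ [a]) = secondClaimed (hist σ τ t) := by
  simp [secondClaimed, altUnion_append, bodd_hist, altUnion]

theorem first_succ (σ τ : Strat E) (t : ℕ) :
    firstClaimed (hist σ τ (t+1)) = firstClaimed (hist σ τ t) ∪ σ (hist σ τ t) := by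
  simp [hist, firstClaimed, altUnion_append, bodd_hist, altUnion]

theorem second_succ (σ τ : Strat E) (t : ℕ) :
    secondClaimed (hist σ τ (t+1)) = secondClaimed (hist σ τ t) ∪
      τ (hist σ τ t ++ [σ (hist σ τ t)]) := by
  simp [hist, secondClaimed, altUnion_append, bodd_hist, altUnion]

theorem legalMove_iff (board : Set E) (h : List (Finset E)) (k : ℕ) (mv : Finset E) :
    LegalMove board h k mv ↔ Leg board (firstClaimed h ∪ secondClaimed h) k mv := by
  unfold LegalMove Leg firstClaimed secondClaimed
  rw [allClaimed_eq]

theorem Leg.card_le {board : Set E} {C : Finset E} {k : ℕ} {mv : Finset E}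
    (h : Leg board C k mv) : mv.card ≤ k := by
  rcases h.2 with h | h
  · exact h.le
  · exact h.1.le

theorem exists_leg [Fintype E] (board : Set E) (C : Finset E) (k : ℕ) (S : Finset E)
    (hS : (↑S : Set E) ⊆ board \ ↑C) (hk : S.card ≤ k) :
    ∃ mv, S ⊆ mv ∧ Leg board C k mv := by
  classical
  set R : Finset E := Finset.univ.filter (fun e => e ∈ board ∧ e ∉ C) with hR
  have hRm : ∀ e, e ∈ R ↔ e ∈ board ∧ e ∉ C := by intro e; simp [hR]
  have hSR : S ⊆ R := fun e he => (hRm e).2 (by have := hS he; simpa using this)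
  by_cases hc : k ≤ R.card
  · obtain ⟨mv, h1, h2, h3⟩ := Finset.exists_subsuperset_card_eq hSR hk hc
    refine ⟨mv, h1, ?_, Or.inl h3⟩
    intro e he
    have := (hRm e).1 (h2 he)
    simpa using this
  · refine ⟨R, hSR, ?_, Or.inr ⟨by omega, ?_⟩⟩
    · intro e he
      have := (hRm e).1 he
      simpa using this
    · intro e he
      exact (hRm e).2 (by simpa using he)

theorem CrossWin.mono {ends : E → V × V} {A B : Set V} {F F' : Set E} (hF : F ⊆ F')
    (h : CrossWin ends A B F) : CrossWin ends A B F' := by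
  obtain ⟨a, ha, b, hb, hr⟩ := h
  refine ⟨a, ha, b, hb, ?_⟩
  refine Relation.ReflTransGen.mono ?_ _ _ hr
  rintro x y ⟨e, he, h⟩
  exact ⟨e, hF he, h⟩

/-- Breaker, to move, wins the global game: positional version. -/
inductive BW (ends : E → V × V) (A B : Set V) (P k : ℕ) : Finset E → Finset E → Prop
  | done (M K : Finset E) : ¬ CrossWin ends A B (Set.univ \ ↑K) → BW ends A B P k M K
  | step (M K N : Finset E) : Leg Set.univ (M ∪ K) k N →
      (∀ X : Finset E, X.card ≤ P → BW ends A B P k (M ∪ X) (K ∪ N)) → BW ends A B P k M K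

theorem BW.not_cross {ends : E → V × V} {A B : Set V} {P k : ℕ} {M K : Finset E}
    (h : BW ends A B P k M K) : Disjoint M K → ¬ CrossWin ends A B (↑M : Set E) := by
  induction h with
  | done M K h =>
    intro hd hc
    refine h (hc.mono ?_)
    intro e he
    exact ⟨trivial, fun hk => (Finset.disjoint_left.1 hd) he hk⟩
  | step M K N hN _ ih =>
    intro hd
    have := ih ∅ (by simp)
    rw [Finset.union_empty] at this
    apply this
    rw [Finset.disjoint_union_right]
    refine ⟨hd, ?_⟩
    rw [Finset.disjoint_right]
    intro e he hm
    have := hN.1 he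
    simp [hm] at this

theorem BW.exists_move [Fintype E] {ends : E → V × V} {A B : Set V} {P k : ℕ} {M K : Finset E}
    (h : BW ends A B P k M K) : ∃ N, Leg Set.univ (M ∪ K) k N ∧
      ∀ X : Finset E, X.card ≤ P → BW ends A B P k (M ∪ X) (K ∪ N) := by
  cases h with
  | done _ _ h =>
    obtain ⟨N, -, hN⟩ := exists_leg (Set.univ : Set E) (M ∪ K) k ∅ (by simp) (by simp)
    refine ⟨N, hN, fun X _ => BW.done _ _ fun hc => h (hc.mono ?_)⟩
    intro e he
    simp at he ⊢
    tauto
  | step _ _ N hN h => exact ⟨N, hN, h⟩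

theorem breakerWins_of_BW [Fintype E] {ends : E → V × V} {A B : Set V} {P k : ℕ}
    (h : ∀ X : Finset E, X.card ≤ P → BW ends A B P k X ∅) :
    BreakerWinsShannon ends (Set.univ : Set E) A B P k := by
  classical
  have hch : ∀ g : List (Finset E), ∃ N, Leg Set.univ (firstClaimed g ∪ secondClaimed g) k N ∧
      (BW ends A B P k (firstClaimed g) (secondClaimed g) →
        ∀ X : Finset E, X.card ≤ P →
          BW ends A B P k (firstClaimed g ∪ X) (secondClaimed g ∪ N)) := by
    intro g
    by_cases hg : BW ends A B P k (firstClaimed g) (secondClaimed g)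
    · obtain ⟨N, h1, h2⟩ := hg.exists_move
      exact ⟨N, h1, fun _ => h2⟩
    · obtain ⟨N, -, hN⟩ := exists_leg (Set.univ : Set E)
        (firstClaimed g ∪ secondClaimed g) k ∅ (by simp) (by simp)
      exact ⟨N, hN, fun h => absurd h hg⟩
  choose τ hτ1 hτ2 using hch
  refine ⟨τ, fun σ hσ => ⟨fun t => (legalMove_iff _ _ _ _).2 (hτ1 _), ?_⟩⟩
  have key : ∀ t, Disjoint (firstClaimed (hist σ τ t)) (secondClaimed (hist σ τ t)) ∧
      ∀ X : Finset E, X.card ≤ P →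
        BW ends A B P k (firstClaimed (hist σ τ t) ∪ X) (secondClaimed (hist σ τ t)) := by
    intro t
    induction t with
    | zero =>
      refine ⟨by simp [hist, firstClaimed, altUnion], fun X hX => ?_⟩
      have := h X hX
      simpa [hist, firstClaimed, secondClaimed, altUnion] using this
    | succ t ih =>
      have hl1 := (legalMove_iff _ _ _ _).1 (hσ t)
      have hl2 := hτ1 (hist σ τ t ++ [σ (hist σ τ t)])
      have hw := hτ2 (hist σ τ t ++ [σ (hist σ τ t)])
      rw [first_succ, second_succ]
      rw [first_half, second_half] at hl2 hw
      refine ⟨?_, hw (ih.2 _ hl1.card_le)⟩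
      rw [Finset.disjoint_left]
      intro e h1 h2
      have d := Finset.disjoint_left.1 ih.1
      have a1 : e ∈ σ (hist σ τ t) → e ∉ firstClaimed (hist σ τ t) ∪ secondClaimed (hist σ τ t) :=
        fun he => by have := hl1.1 he; simpa using this
      have a2 : e ∈ τ (hist σ τ t ++ [σ (hist σ τ t)]) →
          e ∉ firstClaimed (hist σ τ t) ∪ σ (hist σ τ t) ∪ secondClaimed (hist σ τ t) :=
        fun he => by have := hl2.1 he; simpa using this
      have d' := @d e
      simp only [Finset.mem_union] at h1 h2 a1 a2
      tauto
  intro t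
  have := (key t).2 ∅ (by simp)
  rw [Finset.union_empty] at this
  exact this.not_cross (key t).1

/-- positional local win within `n` more Breaker turns (Breaker to move). -/
def LW (ends : E → V × V) (board : Set E) (A B : Set V) (p q : ℕ) :
    ℕ → Finset E → Finset E → Prop
  | 0, _, K => ¬ CrossWin ends A B (board \ ↑K)
  | n+1, M, K => ∃ N, Leg board (M ∪ K) q N ∧ ∀ X, Leg board (M ∪ K ∪ N) p X →
      LW ends board A B p q n (M ∪ X) (K ∪ N)

theorem LW_of_BF [Fintype E] {ends : E → V × V} {board : Set E} {A B : Set V} {p q T : ℕ}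
    (h : BreakerWinsShannonBFWithin ends board A B p q T) :
    LW ends board A B p q T ∅ ∅ := by
  classical
  by_contra hcon
  obtain ⟨τ, hτ⟩ := h
  -- history g: Breaker has moved last
  have hch : ∀ g : List (Finset E), ∃ X,
      Leg board (firstClaimed g ∪ secondClaimed g) p X ∧
      ((∃ X, Leg board (firstClaimed g ∪ secondClaimed g) p X ∧
        ¬ LW ends board A B p q (T - 1 - g.length / 2) (secondClaimed g ∪ X) (firstClaimed g)) →
      ¬ LW ends board A B p q (T - 1 - g.length / 2) (secondClaimed g ∪ X) (firstClaimed g)) := by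
    intro g
    by_cases hg : ∃ X, Leg board (firstClaimed g ∪ secondClaimed g) p X ∧
        ¬ LW ends board A B p q (T - 1 - g.length / 2) (secondClaimed g ∪ X) (firstClaimed g)
    · obtain ⟨X, h1, h2⟩ := hg
      exact ⟨X, h1, fun _ => h2⟩
    · obtain ⟨N, -, hN⟩ := exists_leg board
        (firstClaimed g ∪ secondClaimed g) p ∅ (by simp) (by simp)
      exact ⟨N, hN, fun h => absurd h hg⟩
  choose σ hσ1 hσ2 using hch
  obtain ⟨hF, -, hwin⟩ := hτ σ (fun t => (legalMove_iff _ _ _ _).2 (hσ1 _))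
  have key : ∀ t, t ≤ T → ¬ LW ends board A B p q (T - t)
      (secondClaimed (hist τ σ t)) (firstClaimed (hist τ σ t)) := by
    intro t
    induction t with
    | zero =>
      intro _
      simpa [hist, firstClaimed, secondClaimed, altUnion] using hcon
    | succ t ih =>
      intro ht
      have ih := ih (by omega)
      have hT : T - t = (T - (t+1)) + 1 := by omega
      rw [hT] at ih
      have hl1 := (legalMove_iff _ _ _ _).1 (hF t)
      have hw := hσ2 (hist τ σ t ++ [τ (hist τ σ t)])
      have hlen : T - 1 - (hist τ σ t ++ [τ (hist τ σ t)]).length / 2 = T - (t+1) := by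
        simp [hist_length]; omega
      rw [hlen, first_half, second_half] at hw
      rw [first_succ, second_succ]
      apply hw
      by_contra hno
      push Not at hno
      apply ih
      refine ⟨τ (hist τ σ t), by rwa [Finset.union_comm], fun X hX => ?_⟩
      apply hno X
      convert hX using 1
      ext e; simp only [Finset.mem_union]; tauto
  have := key T le_rfl
  rw [Nat.sub_self] at this
  exact this hwin

theorem LW.full {ends : E → V × V} {board : Set E} {A B : Set V} {p q : ℕ} (n : ℕ) :
    ∀ {M K : Finset E}, (∀ e ∈ board, e ∈ M ∨ e ∈ K) → LW ends board A B p q n M K →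
      ¬ CrossWin ends A B (board \ ↑K) := by
  induction n with
  | zero => intro M K _ h; exact h
  | succ n ih =>
    rintro M K hf ⟨N, hN, h⟩
    have hN0 : N = ∅ := by
      apply Finset.eq_empty_of_forall_notMem
      intro e he
      have h1 := hN.1 he
      have := hf e h1.1
      simp at h1; tauto
    subst hN0
    have := h ∅ ⟨by simp, by
      rcases Nat.eq_zero_or_pos p with h0 | h0
      · left; simp [h0]
      · right
        refine ⟨by simpa using h0, ?_⟩
        intro e he
        have := hf e he.1
        have h2 := he.2
        simp at h2; tauto⟩
    rw [Finset.union_empty, Finset.union_empty] at this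
    exact ih hf this

/-- Actual position `(M, K)` is dominated by a virtual local position won in `n` turns. -/
def Good (ends : E → V × V) (board : Set E) (A B : Set V) (p q n : ℕ) (M K : Finset E) : Prop :=
  ∃ M' K' : Finset E, (∀ e ∈ board, e ∈ M → e ∈ M' ∨ e ∈ K') ∧
    (∀ e ∈ board, e ∈ K ↔ e ∈ K') ∧ LW ends board A B p q n M' K'

theorem Good.zero {ends : E → V × V} {board : Set E} {A B : Set V} {p q : ℕ} {M K : Finset E}
    (h : Good ends board A B p q 0 M K) : ¬ CrossWin ends A B (board \ ↑K) := by
  obtain ⟨M', K', -, h2, h3⟩ := h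
  intro hc
  apply h3
  refine hc.mono ?_
  intro e he
  exact ⟨he.1, fun hk => he.2 ((h2 e he.1).2 hk)⟩

theorem Good.frame {ends : E → V × V} {board : Set E} {A B : Set V} {p q n : ℕ}
    {M K M2 K2 : Finset E}
    (h : Good ends board A B p q n M K) (hM : ∀ e ∈ board, e ∈ M2 → e ∈ M)
    (hK : ∀ e ∈ board, e ∈ K2 ↔ e ∈ K) : Good ends board A B p q n M2 K2 := by
  obtain ⟨M', K', h1, h2, h3⟩ := h
  exact ⟨M', K', fun e he hm => h1 e he (hM e he hm), fun e he => (hK e he).trans (h2 e he), h3⟩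

open Classical in
/-- Strip just played; Maker has claimed `c` edges there since. -/
def Half (ends : E → V × V) (board : Set E) (A B : Set V) (p q n : ℕ)
    (M K : Finset E) (c : ℕ) : Prop :=
  ∀ M2 K2 : Finset E, (∀ e ∈ board, e ∈ K2 ↔ e ∈ K) →
    ((M2 \ M).filter (· ∈ board)).card + c ≤ p → Good ends board A B p q n M2 K2

open Classical in
theorem Half.update {ends : E → V × V} {board : Set E} {A B : Set V} {p q n c : ℕ}
    {M K K1 : Finset E} (h : Half ends board A B p q n M K c) (X : Finset E)
    (hK : ∀ e ∈ board, e ∈ K1 ↔ e ∈ K) :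
    Half ends board A B p q n (M ∪ X) K1 (c + (X.filter (· ∈ board)).card) := by
  intro M2 K2 hK2 hc
  apply h M2 K2 (fun e he => (hK2 e he).trans (hK e he))
  have hsub : (M2 \ M).filter (· ∈ board) ⊆
      (M2 \ (M ∪ X)).filter (· ∈ board) ∪ X.filter (· ∈ board) := by
    intro e; simp; tauto
  have := Finset.card_le_card hsub
  have := Finset.card_union_le ((M2 \ (M ∪ X)).filter (· ∈ board)) (X.filter (· ∈ board))
  omega

theorem Good.step [Fintype E] {ends : E → V × V} {board : Set E} {A B : Set V} {p q n : ℕ}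
    {M K : Finset E}
    (h : Good ends board A B p q (n+1) M K) : ∃ N : Finset E,
      (∀ e ∈ N, e ∈ board ∧ e ∉ M ∧ e ∉ K) ∧
      ((N.card ≤ q ∧ ¬ CrossWin ends A B (board \ ↑(K ∪ N))) ∨
       (N.card = q ∧ Half ends board A B p q n M (K ∪ N) 0)) := by
  classical
  obtain ⟨M', K', h1, h2, N, hN, hw⟩ := h
  have hN1 : ∀ e ∈ N, e ∈ board ∧ e ∉ M' ∧ e ∉ K' := by
    intro e he
    have := hN.1 he
    simpa using this
  refine ⟨N, ?_, ?_⟩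
  · intro e he
    obtain ⟨a, b, c⟩ := hN1 e he
    exact ⟨a, fun hm => (h1 e a hm).elim b c, fun hk => c ((h2 e a).1 hk)⟩
  · rcases hN.2 with hq | ⟨hq, hall⟩
    · right
      refine ⟨hq, ?_⟩
      intro M2 K2 hK2 hc
      obtain ⟨X, hX1, hX2⟩ := exists_leg board (M' ∪ K' ∪ N) p
        (((M2 \ M).filter (· ∈ board)) \ (M' ∪ K' ∪ N)) (by
          intro e he
          simp at he ⊢
          tauto) (le_trans (Finset.card_le_card Finset.sdiff_subset) (by omega))
      refine ⟨M' ∪ X, K' ∪ N, ?_, ?_, hw X hX2⟩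
      · intro e he hm
        have a1 := @hX1 e
        have a2 := h1 e he
        simp only [Finset.mem_sdiff, Finset.mem_filter, Finset.mem_union] at a1 ⊢
        tauto
      · intro e he
        rw [hK2 e he, Finset.mem_union, Finset.mem_union, h2 e he]
    · left
      refine ⟨hq.le, ?_⟩
      have hf : ∀ e ∈ board, e ∈ M' ∨ e ∈ K' ∪ N := by
        intro e he
        have := @hall e
        simp at this ⊢
        tauto
      obtain ⟨X, -, hX⟩ := exists_leg board (M' ∪ K' ∪ N) p ∅ (by simp) (by simp)
      have := LW.full n (M := M' ∪ X) (K := K' ∪ N) (fun e he => by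
        have := hf e he
        simp at this ⊢; tauto) (hw X hX)
      intro hc
      apply this
      refine hc.mono ?_
      intro e he
      have a := h2 e he.1
      simp at he ⊢
      tauto

end Aux

section Main
variable {V E : Type} [Fintype E] [DecidableEq E]

open Classical in
theorem sum_x_le {m : ℕ} {Eloc : Fin m → Set E}
    (hd : ∀ i j, i ≠ j → Disjoint (Eloc i) (Eloc j)) (X : Finset E) (W : Finset (Fin m)) :
    ∑ i ∈ W, (X.filter (· ∈ Eloc i)).card ≤ X.card := by
  rw [← Finset.card_biUnion]
  · apply Finset.card_le_card
    intro e; simp; tauto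
  · intro i _ j _ hij
    rw [Function.onFun, Finset.disjoint_left]
    intro e h1 h2
    exact Set.disjoint_left.1 (hd i j hij) (Finset.mem_filter.1 h1).2 (Finset.mem_filter.1 h2).2

open Classical in
theorem card_untouched {m : ℕ} {Eloc : Fin m → Set E}
    (hd : ∀ i j, i ≠ j → Disjoint (Eloc i) (Eloc j)) (X : Finset E) (U : Finset (Fin m)) :
    U.card ≤ (U.filter (fun i => ∀ e ∈ X, e ∉ Eloc i)).card + X.card := by
  have h1 := Finset.card_filter_add_card_filter_not (s := U) (fun i => ∀ e ∈ X, e ∉ Eloc i)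
  have h2 : (U.filter (fun i => ¬ ∀ e ∈ X, e ∉ Eloc i)).card ≤ X.card := by
    refine le_trans ?_ (sum_x_le hd X (U.filter (fun i => ¬ ∀ e ∈ X, e ∉ Eloc i)))
    rw [Finset.card_eq_sum_ones]
    apply Finset.sum_le_sum
    intro i hi
    have := (Finset.mem_filter.1 hi).2
    push Not at this
    obtain ⟨e, he, hb⟩ := this
    exact Finset.card_pos.2 ⟨e, Finset.mem_filter.2 ⟨he, hb⟩⟩
  omega

theorem inner {ends : E → V × V} {A B : Set V} {p q l m P s n N' : ℕ}
    (hl : 1 ≤ l) (hP : P + 1 = l * (p + 1)) (hs : l + P ≤ s)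
    {Eloc : Fin m → Set E} {Aloc Bloc : Fin m → Set V}
    (hd : ∀ i j, i ≠ j → Disjoint (Eloc i) (Eloc j))
    (hwin : ∀ i, ∀ M K : Finset E, ¬ CrossWin ends (Aloc i) (Bloc i) (Eloc i \ ↑K) →
      BW ends A B P (l * q) M K)
    (hnext : ∀ M K : Finset E, ∀ U : Finset (Fin m), N' ≤ U.card →
      (∀ i ∈ U, Good ends (Eloc i) (Aloc i) (Bloc i) p q n M K) → BW ends A B P (l * q) M K)
    (r : ℕ) : ∀ (M K : Finset E) (U W : Finset (Fin m)) (c : Fin m → ℕ), Disjoint U W →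
      s * r ≤ U.card →
      (∀ i ∈ U, Good ends (Eloc i) (Aloc i) (Bloc i) p q (n+1) M K) →
      (∀ i ∈ W, Half ends (Eloc i) (Aloc i) (Bloc i) p q n M K (c i)) →
      ∑ i ∈ W, c i + (p+1) * N' ≤ (p+1) * W.card + r →
      BW ends A B P (l * q) M K := by
  classical
  induction r with
  | zero =>
    intro M K U W c _ _ _ hW hc
    apply hnext M K (W.filter (fun i => c i ≤ p))
    · have h1 := Finset.card_filter_add_card_filter_not (s := W) (fun i => c i ≤ p)
      have h2 : (p+1) * (W.filter (fun i => ¬ c i ≤ p)).card ≤ ∑ i ∈ W, c i := by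
        refine le_trans ?_ (Finset.sum_le_sum_of_subset
          (Finset.filter_subset (fun i => ¬ c i ≤ p) W))
        rw [mul_comm, ← smul_eq_mul]
        apply Finset.card_nsmul_le_sum
        intro i hi
        have := (Finset.mem_filter.1 hi).2
        omega
      rw [← h1] at hc
      have : (p+1) * N' ≤ (p+1) * (W.filter (fun i => c i ≤ p)).card := by
        rw [mul_add] at hc; omega
      exact Nat.le_of_mul_le_mul_left this (by omega)
    · intro i hi
      obtain ⟨h1, h2⟩ := Finset.mem_filter.1 hi
      exact hW i h1 M K (fun _ _ => Iff.rfl) (by simpa using h2)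
  | succ r ih =>
    intro M K U W c hUW hU hG hW hc
    have hst := fun i : Fin m => fun hi : i ∈ U => (hG i hi).step
    by_cases hinst : ∃ i ∈ U, ∃ N : Finset E, (∀ e ∈ N, e ∈ Eloc i ∧ e ∉ M ∧ e ∉ K) ∧
        N.card ≤ q ∧ ¬ CrossWin ends (Aloc i) (Bloc i) (Eloc i \ ↑(K ∪ N))
    · obtain ⟨i, hi, N, h1, h2, h3⟩ := hinst
      obtain ⟨N1, hN1, hN2⟩ := exists_leg (Set.univ : Set E) (M ∪ K) (l * q) N
        (by intro e he; have := h1 e he; simp; tauto) (by nlinarith)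
      refine BW.step M K N1 hN2 fun X _ => hwin i _ _ fun hcw => h3 (hcw.mono ?_)
      intro e he
      have := @hN1 e
      simp at he ⊢
      tauto
    · have hst' : ∀ i : Fin m, ∃ N : Finset E, i ∈ U →
          (∀ e ∈ N, e ∈ Eloc i ∧ e ∉ M ∧ e ∉ K) ∧ N.card = q ∧
          Half ends (Eloc i) (Aloc i) (Bloc i) p q n M (K ∪ N) 0 := by
        intro i
        by_cases hi : i ∈ U
        · obtain ⟨N, h1, h2 | h2⟩ := hst i hi
          · exact absurd ⟨i, hi, N, h1, h2⟩ hinst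
          · exact ⟨N, fun _ => ⟨h1, h2⟩⟩
        · exact ⟨∅, fun h => absurd h hi⟩
      choose N hN using hst'
      have hlU : l ≤ U.card := by nlinarith
      obtain ⟨L, hLU, hLc⟩ := Finset.exists_subset_card_eq hlU
      have hmem : ∀ i e, e ∈ Eloc i → (e ∈ L.biUnion N ↔ i ∈ L ∧ e ∈ N i) := by
        intro i e he
        constructor
        · intro h
          obtain ⟨j, hj, hej⟩ := Finset.mem_biUnion.1 h
          by_cases hij : i = j
          · subst hij; exact ⟨hj, hej⟩
          · exact absurd ((hN j (hLU hj)).1 e hej).1 (Set.disjoint_left.1 (hd i j hij) he)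
        · rintro ⟨h1, h2⟩
          exact Finset.mem_biUnion.2 ⟨i, h1, h2⟩
      have hcard : (L.biUnion N).card = l * q := by
        rw [Finset.card_biUnion]
        · rw [Finset.sum_congr rfl (fun i hi => (hN i (hLU hi)).2.1)]
          simp [hLc]
        · intro i hi j hj hij
          rw [Function.onFun, Finset.disjoint_left]
          intro e h1 h2
          exact Set.disjoint_left.1 (hd i j hij) ((hN i (hLU hi)).1 e h1).1
            ((hN j (hLU hj)).1 e h2).1
      refine BW.step M K (L.biUnion N) ⟨?_, Or.inl hcard⟩ ?_
      · intro e he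
        obtain ⟨j, hj, hej⟩ := Finset.mem_biUnion.1 he
        have := (hN j (hLU hj)).1 e hej
        simp; tauto
      · intro X hX
        have hWL : Disjoint W L := (Finset.disjoint_of_subset_left hLU hUW).symm
        have hcs : ∑ i ∈ W ∪ L, ((if i ∈ W then c i else 0) + (X.filter (· ∈ Eloc i)).card)
            ≤ ∑ i ∈ W, c i + X.card := by
          rw [Finset.sum_add_distrib]
          refine add_le_add ?_ (sum_x_le hd X _)
          rw [Finset.sum_ite, Finset.sum_const_zero, add_zero]
          apply Finset.sum_le_sum_of_subset
          intro i hi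
          exact (Finset.mem_filter.1 hi).2
        apply ih (M ∪ X) (K ∪ L.biUnion N)
          ((U \ L).filter (fun i => ∀ e ∈ X, e ∉ Eloc i)) (W ∪ L)
          (fun i => (if i ∈ W then c i else 0) + (X.filter (· ∈ Eloc i)).card)
        · rw [Finset.disjoint_left]
          intro i hi hi2
          have hh := Finset.mem_sdiff.1 (Finset.mem_filter.1 hi).1
          rcases Finset.mem_union.1 hi2 with h | h
          · exact Finset.disjoint_left.1 hUW hh.1 h
          · exact hh.2 h
        · have h1 := card_untouched hd X (U \ L)
          have h2 := Finset.card_sdiff_add_card_eq_card hLU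
          rw [mul_add, mul_one] at hU
          omega
        · intro i hi
          obtain ⟨h1, h2⟩ := Finset.mem_filter.1 hi
          obtain ⟨h3, h4⟩ := Finset.mem_sdiff.1 h1
          refine (hG i h3).frame ?_ ?_
          · intro e he hm
            rcases Finset.mem_union.1 hm with h | h
            · exact h
            · exact absurd he (h2 e h)
          · intro e he
            rw [Finset.mem_union, hmem i e he]
            tauto
        · intro i hi
          by_cases hiW : i ∈ W
          · simp only [hiW, if_true]
            refine (hW i hiW).update X ?_
            intro e he
            have := Finset.disjoint_left.1 hWL hiW
            rw [Finset.mem_union, hmem i e he]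
            tauto
          · have hiL : i ∈ L := (Finset.mem_union.1 hi).resolve_left hiW
            simp only [hiW, if_false]
            refine (hN i (hLU hiL)).2.2.update X ?_
            intro e he
            rw [Finset.mem_union, Finset.mem_union, hmem i e he]
            tauto
        · rw [Finset.card_union_of_disjoint hWL, hLc, mul_add]
          have : (p+1) * l = P + 1 := by rw [hP, mul_comm]
          omega

theorem outer {ends : E → V × V} {A B : Set V} {p q l m P s : ℕ}
    (hl : 1 ≤ l) (hP : P + 1 = l * (p + 1)) (hs : l + P ≤ s)
    {Eloc : Fin m → Set E} {Aloc Bloc : Fin m → Set V}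
    (hd : ∀ i j, i ≠ j → Disjoint (Eloc i) (Eloc j))
    (hwin : ∀ i, ∀ M K : Finset E, ¬ CrossWin ends (Aloc i) (Bloc i) (Eloc i \ ↑K) →
      BW ends A B P (l * q) M K) (n : ℕ) :
    ∀ M K : Finset E, ∀ U : Finset (Fin m), (s * (p+1)) ^ n ≤ U.card →
      (∀ i ∈ U, Good ends (Eloc i) (Aloc i) (Bloc i) p q n M K) →
      BW ends A B P (l * q) M K := by
  induction n with
  | zero =>
    intro M K U hU hG
    rw [pow_zero] at hU
    obtain ⟨i, hi⟩ := Finset.card_pos.1 hU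
    exact hwin i M K (hG i hi).zero
  | succ n ih =>
    intro M K U hU hG
    refine inner hl hP hs hd hwin ih ((p+1) * (s * (p+1))^n) M K U ∅ (fun _ => 0)
      (by simp) ?_ hG (by simp) (by simp)
    refine le_trans (le_of_eq ?_) hU
    ring

end Main

/-- **Theorem (general strip theorem).** Let `(G, A, B)` be a Shannon game-triple whose
edge set is partitioned into `m` pairwise edge-disjoint strips `S i`, and suppose that on
each strip there is a local game-triple `(Gᵢ, Aᵢ, Bᵢ)` (with `E(Gᵢ) ⊆ Sᵢ`) such that
(ii) any set of Breaker edges defeating Maker locally defeats her globally, and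
(iii) Breaker has a winning strategy for the `(p,q)`-Shannon switching game on
`(Gᵢ, Aᵢ, Bᵢ)` under the Breaker-First rule ensuring victory within at most `T` turns.
Set `s = l(p+q+1) − 1`. If `m ≥ (s(p+1))^T + l(p+1) − 1`, then Breaker has a winning
strategy for the `(l(p+1)−1, lq)`-Shannon switching game on `(G, A, B)`. -/
theorem breaker_wins_general_strip_theorem
    {V E : Type} [Fintype V] [Fintype E] [DecidableEq E]
    (ends : E → V × V) (A B : Set V)
    (p q l T m : ℕ) (hp : 1 ≤ p) (hq : 1 ≤ q) (hl : 1 ≤ l)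
    (S : Fin m → Set E)
    (hdisj : ∀ i j, i ≠ j → Disjoint (S i) (S j))
    (hcover : (⋃ i, S i) = (Set.univ : Set E))
    (Eloc : Fin m → Set E) (Aloc Bloc : Fin m → Set V)
    (hEloc : ∀ i, Eloc i ⊆ S i)
    (hlocal : ∀ i, ∀ E' ⊆ Eloc i,
      ¬ CrossWin ends (Aloc i) (Bloc i) (Eloc i \ E') →
      ¬ CrossWin ends A B ((Set.univ : Set E) \ E'))
    (hBF : ∀ i, BreakerWinsShannonBFWithin ends (Eloc i) (Aloc i) (Bloc i) p q T)
    (hm : ((l * (p + q + 1) - 1) * (p + 1)) ^ T + l * (p + 1) - 1 ≤ m) :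
    BreakerWinsShannon ends (Set.univ : Set E) A B (l * (p + 1) - 1) (l * q) := by
  classical
  have hd : ∀ i j, i ≠ j → Disjoint (Eloc i) (Eloc j) := fun i j hij =>
    Set.disjoint_of_subset (hEloc i) (hEloc j) (hdisj i j hij)
  have h1 : 1 ≤ l * (p + 1) := Nat.mul_pos hl (Nat.succ_pos p)
  have h2 : l * (p + 1) + l ≤ l * (p + q + 1) := by nlinarith
  have hwin : ∀ i, ∀ M K : Finset E, ¬ CrossWin ends (Aloc i) (Bloc i) (Eloc i \ ↑K) →
      BW ends A B (l * (p + 1) - 1) (l * q) M K := by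
    intro i M K h
    refine BW.done _ _ fun hc => ?_
    refine hlocal i (Eloc i ∩ ↑K) Set.inter_subset_left ?_ (hc.mono ?_)
    · rwa [Set.sdiff_self_inter]
    · intro e he
      exact ⟨trivial, fun h => he.2 h.2⟩
  apply breakerWins_of_BW
  intro X hX
  refine outer hl (by omega) (by omega) hd hwin T X ∅
    (Finset.univ.filter (fun i => ∀ e ∈ X, e ∉ Eloc i))
    (p := p) (s := l * (p + q + 1) - 1) ?_ ?_
  · have := card_untouched hd X Finset.univ
    rw [Finset.card_univ, Fintype.card_fin] at this
    omega
  · intro i hi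
    refine ⟨∅, ∅, ?_, by simp, LW_of_BF (hBF i)⟩
    intro e he hx
    exact absurd he ((Finset.mem_filter.1 hi).2 e hx)

end ShannonStrips
end

section
/- Let (G,A,B) and (G',A',B') be Shannon game-triples such that (G',A',B') can be obtained from (G,A,B) by a finite sequence of vertex-deletions, edge-deletions and vertex-separations (where a deleted vertex is removed from the distinguished sets, and under vertex-separation of a vertex v into v₁ and v₂, the vertex v is replaced by both v₁ and v₂ in each distinguished set containing it). Then for all p, q ∈ ℕ: (i) if Maker has a winning strategy for the (p,q)-Shannon switching game on (G',A',B'), then Maker has a winning strategy for the (p,q)-Shannon switching game on (G,A,B); (ii) if Breaker has a winning strategy for the (p,q)-Shannon switching game on (G,A,B), then Breaker has a winning strategy for the (p,q)-Shannon switching game on (G',A',B'). -/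
namespace ShannonMonotone

/-- A Shannon game-triple: a finite multigraph (with possible loops), given by a finite
vertex set `V ⊆ ℕ`, a finite edge set `E ⊆ ℕ` and an edge-endpoint map `ends`, together
with two distinguished sets of vertices `A` and `B`. -/
structure Triple : Type where
  V : Finset ℕ
  E : Finset ℕ
  ends : ℕ → ℕ × ℕ
  A : Finset ℕ
  B : Finset ℕ

/-- Well-formedness of a game-triple: the endpoints of every edge are vertices, and the
distinguished sets consist of vertices. -/
def WF (t : Triple) : Prop :=
  (∀ e ∈ t.E, (t.ends e).1 ∈ t.V ∧ (t.ends e).2 ∈ t.V) ∧ t.A ⊆ t.V ∧ t.B ⊆ t.V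

/-- The edge `e` is incident to the vertex `v` in the triple `t`. -/
def incid (t : Triple) (v e : ℕ) : Prop := (t.ends e).1 = v ∨ (t.ends e).2 = v

/-- The number `m_G(u,w)` of edges of `t` joining the (distinct) vertices `u` and `w`. -/
def multTo (t : Triple) (u w : ℕ) : ℕ :=
  (t.E.filter (fun e => t.ends e = (u, w) ∨ t.ends e = (w, u))).card

/-- The number `m_G(v)` of loops of `t` at the vertex `v`. -/
def loopsAt (t : Triple) (v : ℕ) : ℕ :=
  (t.E.filter (fun e => t.ends e = (v, v))).card

/-- `t'` is obtained from `t` by deleting a vertex `v` (together with all edges incident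
to it; `v` is removed from the distinguished sets). -/
def DelVtx (t t' : Triple) : Prop :=
  ∃ v ∈ t.V, t'.V = t.V.erase v ∧ t'.ends = t.ends ∧
    (∀ e, e ∈ t'.E ↔ e ∈ t.E ∧ ¬ incid t v e) ∧
    t'.A = t.A.erase v ∧ t'.B = t.B.erase v

/-- `t'` is obtained from `t` by deleting an edge `e`. -/
def DelEdge (t t' : Triple) : Prop :=
  ∃ e ∈ t.E, t'.V = t.V ∧ t'.ends = t.ends ∧ t'.E = t.E.erase e ∧
    t'.A = t.A ∧ t'.B = t.B

/-- `t'` is obtained from `t` by a vertex-separation: a vertex `v` is deleted and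
replaced by two (new, distinct, adjacent) vertices `v₁` and `v₂`; edges not incident to
`v` are kept unchanged, all other edges of `t'` are incident to `v₁` or `v₂`, and they
satisfy the counting relations
`m_{G'}(v₁,v₂) + m_{G'}(v₁) + m_{G'}(v₂) = m_G(v) + 1` and
`m_{G'}(u,v₁) + m_{G'}(u,v₂) = m_G(u,v)` for every vertex `u ≠ v`. A vertex `v` in a
distinguished set is replaced there by both `v₁` and `v₂`. -/
def SepVtx (t t' : Triple) : Prop :=
  ∃ v v₁ v₂ : ℕ, v ∈ t.V ∧ v₁ ≠ v₂ ∧ v₁ ∉ t.V.erase v ∧ v₂ ∉ t.V.erase v ∧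
    t'.V = insert v₁ (insert v₂ (t.V.erase v)) ∧
    (∀ e ∈ t.E, ¬ incid t v e → e ∈ t'.E ∧ t'.ends e = t.ends e) ∧
    (∀ e ∈ t'.E, ¬ incid t' v₁ e ∧ ¬ incid t' v₂ e →
      e ∈ t.E ∧ t'.ends e = t.ends e ∧ ¬ incid t v e) ∧
    (∀ e ∈ t'.E, (t'.ends e).1 ∈ t'.V ∧ (t'.ends e).2 ∈ t'.V) ∧
    1 ≤ multTo t' v₁ v₂ ∧
    multTo t' v₁ v₂ + loopsAt t' v₁ + loopsAt t' v₂ = loopsAt t v + 1 ∧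
    (∀ u ∈ t.V.erase v, multTo t' u v₁ + multTo t' u v₂ = multTo t u v) ∧
    t'.A = (if v ∈ t.A then insert v₁ (insert v₂ (t.A.erase v)) else t.A) ∧
    t'.B = (if v ∈ t.B then insert v₁ (insert v₂ (t.B.erase v)) else t.B)

/-- `t'` is obtained from `t` by a single vertex-deletion, edge-deletion or
vertex-separation. -/
def Step (t t' : Triple) : Prop := DelVtx t t' ∨ DelEdge t t' ∨ SepVtx t t'

/-- `u` is joined to `v` by a walk using only edges from `F` in the triple `t`. -/
def Reach (t : Triple) (F : Set ℕ) (u v : ℕ) : Prop :=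
  Relation.ReflTransGen
    (fun a b => ∃ e ∈ F, e ∈ t.E ∧
      (((t.ends e).1 = a ∧ (t.ends e).2 = b) ∨ ((t.ends e).1 = b ∧ (t.ends e).2 = a))) u v

/-- The edge set `F` contains all the edges of an `A`–`B` crossing path of `t`. -/
def CrossWin (t : Triple) (F : Set ℕ) : Prop :=
  ∃ a ∈ t.A, ∃ b ∈ t.B, Reach t F a b

/-- A strategy: given the list of all moves played so far (oldest first), produce the
next move (a finite set of edges to claim). -/
abbrev Strat : Type := List (Finset ℕ) → Finset ℕ

/-- The union of the moves sitting in positions of the given parity of a history. -/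
def altUnion : Bool → List (Finset ℕ) → Finset ℕ
  | _, [] => ∅
  | true, mv :: h => mv ∪ altUnion false h
  | false, _ :: h => altUnion true h

/-- All edges claimed by Maker (the player moving first) in a history. -/
def makerClaimed (h : List (Finset ℕ)) : Finset ℕ := altUnion true h

/-- All edges claimed so far in a history. -/
def allClaimed (h : List (Finset ℕ)) : Finset ℕ := h.foldr (· ∪ ·) ∅

/-- The history of moves (oldest first) after `t` full rounds, when Maker (moving first)
uses strategy `σ` and Breaker uses strategy `τ`. -/
def hist (σ τ : Strat) : ℕ → List (Finset ℕ)
  | 0 => []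
  | t + 1 =>
    let h := hist σ τ t
    h ++ [σ h, τ (h ++ [σ h])]

/-- The move `mv` is legal on `board` after the history `h` for a player of bias `k`: it
consists of as-yet-unclaimed edges of the board, exactly `k` of them unless fewer than
`k` unclaimed edges remain, in which case the player claims all of them. -/
def LegalMove (board : Set ℕ) (h : List (Finset ℕ)) (k : ℕ) (mv : Finset ℕ) : Prop :=
  (↑mv : Set ℕ) ⊆ board \ ↑(allClaimed h) ∧
    (mv.card = k ∨ (mv.card < k ∧ board \ ↑(allClaimed h) ⊆ (↑mv : Set ℕ)))

/-- Maker (with bias `p`) always moves legally when playing `σ` against `τ`. -/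
def MakerLegal (board : Set ℕ) (p : ℕ) (σ τ : Strat) : Prop :=
  ∀ t, LegalMove board (hist σ τ t) p (σ (hist σ τ t))

/-- Breaker (with bias `q`) always moves legally when playing `τ` against `σ`. -/
def BreakerLegal (board : Set ℕ) (q : ℕ) (σ τ : Strat) : Prop :=
  ∀ t, LegalMove board (hist σ τ t ++ [σ (hist σ τ t)]) q
    (τ (hist σ τ t ++ [σ (hist σ τ t)]))

/-- Maker has a winning strategy for the `(p,q)`-Shannon switching game on the
game-triple `t`: moving first and claiming `p` edges per turn against Breaker's `q`, she
can guarantee to claim all the edges of an `A`–`B` crossing path. -/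
def MakerWins (t : Triple) (p q : ℕ) : Prop :=
  ∃ σ : Strat, ∀ τ : Strat, BreakerLegal (↑t.E) q σ τ →
    MakerLegal (↑t.E) p σ τ ∧ ∃ k, CrossWin t (↑(makerClaimed (hist σ τ k)) : Set ℕ)

/-- Breaker has a winning strategy for the `(p,q)`-Shannon switching game on the
game-triple `t`: claiming `q` edges per turn against Maker's `p`, he can forever prevent
Maker's claimed edges from containing an `A`–`B` crossing path. -/
def BreakerWins (t : Triple) (p q : ℕ) : Prop :=
  ∃ τ : Strat, ∀ σ : Strat, MakerLegal (↑t.E) p σ τ →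
    BreakerLegal (↑t.E) q σ τ ∧ ∀ k, ¬ CrossWin t (↑(makerClaimed (hist σ τ k)) : Set ℕ)

def Leg (R : Finset ℕ) (k : ℕ) (X : Finset ℕ) : Prop :=
  X ⊆ R ∧ (X.card = k ∨ (X.card < k ∧ R ⊆ X))

lemma exists_leg_superset (R Z : Finset ℕ) (k : ℕ) (hZ : Z ⊆ R) (hk : Z.card ≤ k) :
    ∃ X, Leg R k X ∧ Z ⊆ X := by
  by_cases h : k ≤ R.card
  · obtain ⟨X, h1, h2, h3⟩ := Finset.exists_subsuperset_card_eq hZ hk h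
    exact ⟨X, ⟨h2, Or.inl h3⟩, h1⟩
  · exact ⟨R, ⟨subset_rfl, Or.inr ⟨by omega, subset_rfl⟩⟩, hZ⟩

lemma exists_leg (R : Finset ℕ) (k : ℕ) : ∃ X, Leg R k X := by
  obtain ⟨X, h, _⟩ := exists_leg_superset R ∅ k (by simp) (by simp)
  exact ⟨X, h⟩

lemma Leg.card_le {R X : Finset ℕ} {k : ℕ} (h : Leg R k X) : X.card ≤ k := by
  rcases h.2 with h | h
  · exact h.le
  · exact h.1.le

lemma legal_iff (E : Finset ℕ) (h : List (Finset ℕ)) (k : ℕ) (X : Finset ℕ) :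
    LegalMove (↑E) h k X ↔ Leg (E \ allClaimed h) k X := by
  unfold LegalMove Leg
  rw [← Finset.coe_sdiff, Finset.coe_subset, Finset.coe_subset]

inductive MW (p q : ℕ) (W : Finset ℕ → Prop) : Finset ℕ → Finset ℕ → Prop
  | win (M R : Finset ℕ) : W M → MW p q W M R
  | move (M R X : Finset ℕ) : Leg R p X →
      (∀ Y, Leg (R \ X) q Y → MW p q W (M ∪ X) ((R \ X) \ Y)) → MW p q W M R

lemma MW.empty {p q : ℕ} {W : Finset ℕ → Prop} {M R : Finset ℕ} (h : MW p q W M R) :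
    R = ∅ → W M := by
  induction h with
  | win M R h => intro _; exact h
  | move M R X hX _ ih =>
    rintro rfl
    have hX0 : X = ∅ := Finset.subset_empty.mp hX.1
    subst hX0
    obtain ⟨Y, hY⟩ := exists_leg (∅ \ ∅ : Finset ℕ) q
    have := ih Y hY (by simp)
    simpa using this

lemma mw_sim {p q : ℕ} {W W' : Finset ℕ → Prop} (D : Finset ℕ) (φ : ℕ → ℕ)
    (hinj : Set.InjOn φ (D : Set ℕ))
    (hW : ∀ M' M : Finset ℕ, (∀ e ∈ D, e ∈ M' → φ e ∈ M) → W' M' → W M)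
    {M' R' : Finset ℕ} (h : MW p q W' M' R') :
    ∀ M R : Finset ℕ, (∀ e ∈ D, e ∈ M' → φ e ∈ M) → (∀ e ∈ D, e ∈ R' → φ e ∈ M ∪ R) →
      MW p q W M R := by
  induction h with
  | win M' R' h => intro M R h1 _; exact MW.win _ _ (hW M' M h1 h)
  | move M' R' X' hX' _ ih =>
    intro M R h1 h2
    obtain ⟨X, hX, hsub⟩ := exists_leg_superset R (((X' ∩ D).image φ) ∩ R) p
      Finset.inter_subset_right
      (((Finset.card_le_card Finset.inter_subset_left).trans Finset.card_image_le).trans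
        ((Finset.card_le_card Finset.inter_subset_left).trans hX'.card_le))
    refine MW.move M R X hX ?_
    intro Y hY
    obtain ⟨Y', hY', hsub'⟩ := exists_leg_superset (R' \ X')
      ((R' \ X').filter (fun e => e ∈ D ∧ φ e ∈ Y)) q (Finset.filter_subset _ _) (by
        refine le_trans ?_ hY.card_le
        apply Finset.card_le_card_of_injOn φ
        · intro e he
          simp at he
          exact he.2.2
        · intro a ha b hb hab
          simp at ha hb
          exact hinj ha.2.1 hb.2.1 hab)
    refine ih Y' hY' _ _ ?_ ?_
    · intro e he heM
      rcases Finset.mem_union.mp heM with heM | heX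
      · exact Finset.mem_union_left _ (h1 e he heM)
      · rcases Finset.mem_union.mp (h2 e he (hX'.1 heX)) with h | h
        · exact Finset.mem_union_left _ h
        · refine Finset.mem_union_right _ (hsub ?_)
          exact Finset.mem_inter.mpr ⟨Finset.mem_image_of_mem _ (Finset.mem_inter.mpr ⟨heX, he⟩), h⟩
    · intro e he heR
      have heR1 := Finset.mem_sdiff.mp heR
      have heR2 := Finset.mem_sdiff.mp heR1.1
      have hnY : φ e ∉ Y := fun hc => heR1.2 (hsub' (Finset.mem_filter.mpr ⟨heR1.1, he, hc⟩))
      have := h2 e he heR2.1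
      simp only [Finset.mem_union, Finset.mem_sdiff] at this ⊢
      tauto

lemma allClaimed_append (h l : List (Finset ℕ)) :
    allClaimed (h ++ l) = allClaimed h ∪ allClaimed l := by
  induction h with
  | nil => simp [allClaimed]
  | cons a h ih =>
    simp only [allClaimed, List.cons_append, List.foldr_cons] at ih ⊢
    rw [ih, Finset.union_assoc]

lemma altUnion_append (l : List (Finset ℕ)) : ∀ (h : List (Finset ℕ)) (b : Bool), Even h.length →
    altUnion b (h ++ l) = altUnion b h ∪ altUnion b l
  | [], b, _ => by cases b <;> simp [altUnion]
  | [a], b, h => by simp at h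
  | a :: a' :: h, b, hh => by
    have h' : Even h.length := by
      simp only [List.length_cons] at hh
      rw [add_assoc, Nat.even_add] at hh
      simpa using hh
    have := altUnion_append l h b h'
    cases b <;> simp [altUnion, this, Finset.union_assoc]

lemma hist_even (σ τ : Strat) (n : ℕ) : Even (hist σ τ n).length := by
  induction n with
  | zero => simp [hist]
  | succ n ih => 
    simp only [hist, List.length_append, List.length_cons, List.length_nil]
    rw [Nat.even_add]
    simp [ih]

lemma maker_mid (σ τ : Strat) (n : ℕ) (X : Finset ℕ) :
    makerClaimed (hist σ τ n ++ [X]) = makerClaimed (hist σ τ n) ∪ X := by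
  unfold makerClaimed
  rw [altUnion_append _ _ _ (hist_even σ τ n)]
  simp [altUnion]

lemma maker_succ (σ τ : Strat) (n : ℕ) :
    makerClaimed (hist σ τ (n+1)) = makerClaimed (hist σ τ n) ∪ σ (hist σ τ n) := by
  unfold makerClaimed
  simp only [hist]
  rw [altUnion_append _ _ _ (hist_even σ τ n)]
  simp [altUnion]

lemma rem_mid (E : Finset ℕ) (h : List (Finset ℕ)) (X : Finset ℕ) :
    E \ allClaimed (h ++ [X]) = (E \ allClaimed h) \ X := by
  rw [allClaimed_append]
  ext; simp [allClaimed]; tauto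

lemma rem_succ (E : Finset ℕ) (σ τ : Strat) (n : ℕ) :
    E \ allClaimed (hist σ τ (n+1)) = ((E \ allClaimed (hist σ τ n)) \ σ (hist σ τ n)) \
      τ (hist σ τ n ++ [σ (hist σ τ n)]) := by
  simp only [hist]
  rw [allClaimed_append]
  ext; simp [allClaimed]; tauto

def WW (t : Triple) (M : Finset ℕ) : Prop := CrossWin t (↑M : Set ℕ)

lemma makerWins_of_mw (t : Triple) (p q : ℕ) (hp : 1 ≤ p) (h : MW p q (WW t) ∅ t.E) :
    MakerWins t p q := by
  classical
  have key : ∀ hh : List (Finset ℕ), ∃ X, Leg (t.E \ allClaimed hh) p X ∧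
      (MW p q (WW t) (makerClaimed hh) (t.E \ allClaimed hh) → ¬ WW t (makerClaimed hh) →
        ∀ Y, Leg ((t.E \ allClaimed hh) \ X) q Y →
          MW p q (WW t) (makerClaimed hh ∪ X) (((t.E \ allClaimed hh) \ X) \ Y)) := by
    intro hh
    by_cases h1 : MW p q (WW t) (makerClaimed hh) (t.E \ allClaimed hh) ∧
      ¬ WW t (makerClaimed hh)
    · obtain ⟨h1, h2⟩ := h1
      cases h1 with
      | win _ _ h => exact absurd h h2
      | move _ _ X hX hY => exact ⟨X, hX, fun _ _ => hY⟩
    · obtain ⟨X, hX⟩ := exists_leg (t.E \ allClaimed hh) p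
      exact ⟨X, hX, fun a b => absurd ⟨a, b⟩ h1⟩
  choose σ hσ1 hσ2 using key
  refine ⟨σ, fun τ hτ => ⟨fun n => (legal_iff _ _ _ _).mpr (hσ1 _), ?_⟩⟩
  by_contra hno
  push Not at hno
  have inv : ∀ n, MW p q (WW t) (makerClaimed (hist σ τ n)) (t.E \ allClaimed (hist σ τ n)) := by
    intro n
    induction n with
    | zero => simpa [hist, makerClaimed, altUnion, allClaimed] using h
    | succ n ih =>
      rw [maker_succ, rem_succ]
      refine hσ2 _ ih (hno n) _ ?_
      have := (legal_iff _ _ _ _).mp (hτ n)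
      rwa [rem_mid] at this
  have dec : ∀ n, (t.E \ allClaimed (hist σ τ n)).card + n ≤ t.E.card ∨
      t.E \ allClaimed (hist σ τ n) = ∅ := by
    intro n
    induction n with
    | zero => left; simp [hist, allClaimed]
    | succ n ih =>
      have hl := hσ1 (hist σ τ n)
      rw [rem_succ]
      rcases ih with ih | ih
      · by_cases hR : t.E \ allClaimed (hist σ τ n) = ∅
        · right; rw [hR]; simp
        · left
          have hpos : 1 ≤ (σ (hist σ τ n)).card := by
            rcases hl.2 with h | h
            · omega
            · exact (Finset.card_pos.mpr (Finset.nonempty_iff_ne_empty.mpr hR)).trans_le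
                (Finset.card_le_card h.2)
          have h1 := Finset.card_sdiff_add_card_eq_card hl.1
          have h2 := Finset.card_le_card (Finset.sdiff_subset
            (s := (t.E \ allClaimed (hist σ τ n)) \ σ (hist σ τ n))
            (t := τ (hist σ τ n ++ [σ (hist σ τ n)])))
          omega
      · right; rw [ih]; simp
  have := dec (t.E.card)
  have h0 : t.E \ allClaimed (hist σ τ t.E.card) = ∅ := by
    rcases this with h | h
    · exact Finset.card_eq_zero.mp (by omega)
    · exact h
  exact hno _ ((inv t.E.card).empty h0)

lemma breakerWins_of_not_mw (t : Triple) (p q : ℕ) (h : ¬ MW p q (WW t) ∅ t.E) :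
    BreakerWins t p q := by
  classical
  have key : ∀ hh : List (Finset ℕ), ∃ Y, Leg (t.E \ allClaimed hh) q Y ∧
      ((∃ Y, Leg (t.E \ allClaimed hh) q Y ∧
        ¬ MW p q (WW t) (makerClaimed hh) ((t.E \ allClaimed hh) \ Y)) →
        ¬ MW p q (WW t) (makerClaimed hh) ((t.E \ allClaimed hh) \ Y)) := by
    intro hh
    by_cases h1 : ∃ Y, Leg (t.E \ allClaimed hh) q Y ∧
        ¬ MW p q (WW t) (makerClaimed hh) ((t.E \ allClaimed hh) \ Y)
    · obtain ⟨Y, hY, hY'⟩ := h1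
      exact ⟨Y, hY, fun _ => hY'⟩
    · obtain ⟨X, hX⟩ := exists_leg (t.E \ allClaimed hh) q
      exact ⟨X, hX, fun a => absurd a h1⟩
  choose τ hτ1 hτ2 using key
  refine ⟨τ, fun σ hσ => ⟨fun n => (legal_iff _ _ _ _).mpr (hτ1 _), ?_⟩⟩
  have inv : ∀ n, ¬ MW p q (WW t) (makerClaimed (hist σ τ n))
      (t.E \ allClaimed (hist σ τ n)) := by
    intro n
    induction n with
    | zero => simpa [hist, makerClaimed, altUnion, allClaimed] using h
    | succ n ih =>
      have h2 := hτ2 (hist σ τ n ++ [σ (hist σ τ n)])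
      rw [maker_mid, rem_mid] at h2
      rw [maker_succ, rem_succ]
      apply h2
      by_contra hcon
      push Not at hcon
      exact ih (MW.move _ _ _ ((legal_iff _ _ _ _).mp (hσ n)) hcon)
  intro k hk
  exact inv k (MW.win _ _ hk)

lemma not_both (t : Triple) (p q : ℕ) (hM : MakerWins t p q) (hB : BreakerWins t p q) :
    False := by
  classical
  obtain ⟨σ, hσ⟩ := hM
  obtain ⟨τ, hτ⟩ := hB
  have fix : ∀ (s : Strat) (k : ℕ), ∃ s' : Strat,
      (∀ h, LegalMove (↑t.E) h k (s' h)) ∧ ∀ h, LegalMove (↑t.E) h k (s h) → s' h = s h := by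
    intro s k
    have : ∀ h, ∃ X, LegalMove (↑t.E) h k X ∧ (LegalMove (↑t.E) h k (s h) → X = s h) := by
      intro h
      by_cases hl : LegalMove (↑t.E) h k (s h)
      · exact ⟨s h, hl, fun _ => rfl⟩
      · obtain ⟨X, hX⟩ := exists_leg (t.E \ allClaimed h) k
        exact ⟨X, (legal_iff _ _ _ _).mpr hX, fun a => absurd a hl⟩
    choose s' h1 h2 using this
    exact ⟨s', h1, h2⟩
  obtain ⟨σ', hσ1, hσ2⟩ := fix σ p
  obtain ⟨τ', hτ1, hτ2⟩ := fix τ q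
  obtain ⟨hm, k, hk⟩ := hσ τ' (fun n => hτ1 _)
  obtain ⟨hb, hnk⟩ := hτ σ' (fun n => hσ1 _)
  have heq : ∀ n, hist σ τ' n = hist σ' τ n := by
    intro n
    induction n with
    | zero => rfl
    | succ n ih =>
      have e1 : σ' (hist σ' τ n) = σ (hist σ' τ n) := by
        apply hσ2
        have := hm n
        rwa [ih] at this
      have e2 := hτ2 _ (hb n)
      rw [e1] at e2
      simp only [hist]
      rw [ih, e1, e2]
  apply hnk k
  rw [← heq]
  exact hk

lemma mono_of_mw (t t' : Triple) (p q : ℕ) (hp : 1 ≤ p)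
    (h : MW p q (WW t') ∅ t'.E → MW p q (WW t) ∅ t.E) :
    (MakerWins t' p q → MakerWins t p q) ∧ (BreakerWins t p q → BreakerWins t' p q) := by
  constructor
  · intro hM
    apply makerWins_of_mw t p q hp
    apply h
    by_contra hc
    exact not_both _ _ _ hM (breakerWins_of_not_mw _ _ _ hc)
  · intro hB
    apply breakerWins_of_not_mw
    intro hc
    exact not_both _ _ _ (makerWins_of_mw t p q hp (h hc)) hB

lemma mw_of_map (t t' : Triple) (p q : ℕ) (c φ : ℕ → ℕ) (D : Finset ℕ)
    (hinj : Set.InjOn φ (D : Set ℕ)) (hD : ∀ e ∈ D, φ e ∈ t.E)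
    (hA : ∀ a ∈ t'.A, c a ∈ t.A) (hB : ∀ a ∈ t'.B, c a ∈ t.B)
    (hE : ∀ e ∈ t'.E, c (t'.ends e).1 = c (t'.ends e).2 ∨
      (e ∈ D ∧ s((t.ends (φ e)).1, (t.ends (φ e)).2) =
        s(c (t'.ends e).1, c (t'.ends e).2)))
    (h : MW p q (WW t') ∅ t'.E) : MW p q (WW t) ∅ t.E := by
  refine mw_sim D φ hinj ?_ h ∅ t.E (by simp) (fun e he _ => by simpa using hD e he)
  rintro M' M hM ⟨a, ha, b, hb, hr⟩
  refine ⟨c a, hA a ha, c b, hB b hb, ?_⟩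
  unfold Reach at hr ⊢
  clear hb
  induction hr with
  | refl => exact Relation.ReflTransGen.refl
  | tail _ hstep ih =>
    refine ih.trans ?_
    obtain ⟨e, heM, heE, hends⟩ := hstep
    rcases hE e heE with h1 | ⟨h1, h2⟩
    · rcases hends with ⟨rfl, rfl⟩ | ⟨rfl, rfl⟩ <;> rw [h1]
    · apply Relation.ReflTransGen.single
      refine ⟨φ e, by simpa using hM e h1 (by simpa using heM), hD e h1, ?_⟩
      rw [Sym2.eq_iff] at h2
      rcases hends with ⟨rfl, rfl⟩ | ⟨rfl, rfl⟩ <;> tauto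

lemma exists_matching {K : Type*} [DecidableEq K] (D E : Finset ℕ) (f g : ℕ → K)
    (h : ∀ k, (D.filter (fun e => f e = k)).card ≤ (E.filter (fun e => g e = k)).card) :
    ∃ φ : ℕ → ℕ, Set.InjOn φ (D : Set ℕ) ∧ ∀ e ∈ D, φ e ∈ E ∧ g (φ e) = f e := by
  have : ∀ k, ∃ ψ : ℕ → ℕ, (∀ e ∈ D.filter (fun e => f e = k), ψ e ∈ E.filter (fun e => g e = k)) ∧
      Set.InjOn ψ (D.filter (fun e => f e = k) : Set ℕ) := by
    intro k
    have hn : Nonempty (↥(D.filter (fun e => f e = k)) ↪ ↥(E.filter (fun e => g e = k))) := by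
      apply Function.Embedding.nonempty_of_card_le
      simpa using h k
    obtain ⟨i⟩ := hn
    refine ⟨fun e => if he : e ∈ D.filter (fun e => f e = k) then (i ⟨e, he⟩ : ℕ) else 0, ?_, ?_⟩
    · intro e he
      simp only [he, dite_true]
      exact (i ⟨e, he⟩).2
    · intro a ha b hb hab
      have ha' : a ∈ D.filter (fun e => f e = k) := ha
      have hb' : b ∈ D.filter (fun e => f e = k) := hb
      simp only [ha', hb', dite_true] at hab
      have := i.injective (Subtype.ext hab)
      exact congrArg Subtype.val this
  choose ψ h1 h2 using this
  refine ⟨fun e => ψ (f e) e, ?_, ?_⟩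
  · intro a ha b hb hab
    have m1 := h1 (f a) a (by simpa using ha)
    have m2 := h1 (f b) b (by simpa using hb)
    simp only [Finset.mem_filter] at m1 m2
    have hab' : ψ (f a) a = ψ (f b) b := hab
    have hf : f a = f b := by rw [← m1.2, ← m2.2, hab']
    rw [← hf] at hab'
    exact h2 (f a) (by simpa using ha) (by simpa [hf] using hb) hab'
  · intro e he
    have m1 := h1 (f e) e (by simpa using he)
    simpa using m1

set_option maxHeartbeats 1000000 in
lemma sep_mw (t t' : Triple) (hwf : WF t) (p q : ℕ) (hs : SepVtx t t')
    (h : MW p q (WW t') ∅ t'.E) : MW p q (WW t) ∅ t.E := by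
  classical
  obtain ⟨v, v₁, v₂, hv, hne, hv1, hv2, hV, hold, hold', hends, hone, hloop, hmult, hA, hB⟩ := hs
  set c : ℕ → ℕ := fun x => if x = v₁ ∨ x = v₂ then v else x with hc
  have hcne : ∀ x, x ∈ t.V.erase v → c x = x := by
    intro x hx
    have : ¬ (x = v₁ ∨ x = v₂) := by
      rintro (rfl | rfl)
      · exact hv1 hx
      · exact hv2 hx
    simp [hc, this]
  have hc1 : c v₁ = v := by simp [hc]
  have hc2 : c v₂ = v := by simp [hc]
  have hcase : ∀ x ∈ t'.V, x = v₁ ∨ x = v₂ ∨ (x ∈ t.V.erase v ∧ x ≠ v ∧ x ≠ v₁ ∧ x ≠ v₂) := by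
    intro x hx
    rw [hV] at hx
    simp only [Finset.mem_insert] at hx
    rcases hx with h | h | h
    · exact Or.inl h
    · exact Or.inr (Or.inl h)
    · refine Or.inr (Or.inr ⟨h, (Finset.mem_erase.mp h).1, ?_, ?_⟩)
      · rintro rfl; exact hv1 h
      · rintro rfl; exact hv2 h
  have hcv : ∀ x ∈ t'.V, c x = v → x = v₁ ∨ x = v₂ := by
    intro x hx hxv
    rcases hcase x hx with h | h | h
    · exact Or.inl h
    · exact Or.inr h
    · rw [hcne x h.1] at hxv
      exact absurd hxv h.2.1
  have hcu : ∀ x ∈ t'.V, ∀ u, c x = u → u ≠ v → x = u ∧ u ∈ t.V.erase v ∧ x ≠ v₁ ∧ x ≠ v₂ := by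
    intro x hx u hxu hu
    rcases hcase x hx with h | h | h
    · subst h; exact absurd (hxu.symm.trans hc1) hu
    · subst h; exact absurd (hxu.symm.trans hc2) hu
    · rw [hcne x h.1] at hxu
      subst hxu
      exact ⟨rfl, h.1, h.2.2.1, h.2.2.2⟩
  obtain ⟨e0, he0⟩ := Finset.card_pos.mp (lt_of_lt_of_le Nat.zero_lt_one hone)
  have he0' := Finset.mem_filter.mp he0
  have hmatch : ∃ φ : ℕ → ℕ, Set.InjOn φ (t'.E.erase e0 : Set ℕ) ∧ ∀ e ∈ t'.E.erase e0,
      φ e ∈ t.E ∧ s((t.ends (φ e)).1, (t.ends (φ e)).2) =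
        s(c (t'.ends e).1, c (t'.ends e).2) := by
    apply exists_matching (t'.E.erase e0) t.E
      (fun e => s(c (t'.ends e).1, c (t'.ends e).2)) (fun e => s((t.ends e).1, (t.ends e).2))
    have hmix : ∀ u, u ≠ v →
        ((t'.E.erase e0).filter (fun e => s(c (t'.ends e).1, c (t'.ends e).2) = s(u, v))).card ≤
        (t.E.filter (fun e => s((t.ends e).1, (t.ends e).2) = s(u, v))).card := by
      intro u hu
      have hR : (t.E.filter (fun e => s((t.ends e).1, (t.ends e).2) = s(u, v))).card
          = multTo t u v := by
        unfold multTo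
        congr 1
        ext e
        simp only [Finset.mem_filter, Sym2.eq_iff, Prod.ext_iff]
      rw [hR]
      by_cases huV : u ∈ t.V.erase v
      · rw [← hmult u huV]
        unfold multTo
        refine le_trans (Finset.card_le_card ?_) (Finset.card_union_le _ _)
        intro e he
        simp only [Finset.mem_filter, Finset.mem_erase, Sym2.eq_iff] at he
        obtain ⟨⟨_, heE⟩, hh⟩ := he
        have hE := hends e heE
        simp only [Finset.mem_union, Finset.mem_filter, Prod.ext_iff]
        rcases hh with ⟨ha, hb⟩ | ⟨ha, hb⟩
        · have g1 := hcu _ hE.1 u ha hu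
          have g2 := hcv _ hE.2 hb
          clear * - g1 g2 heE
          tauto
        · have g1 := hcu _ hE.2 u hb hu
          have g2 := hcv _ hE.1 ha
          clear * - g1 g2 heE
          tauto
      · rw [Finset.card_eq_zero.mpr]
        · exact Nat.zero_le _
        rw [Finset.filter_eq_empty_iff]
        intro e he hh
        have heE := (Finset.mem_erase.mp he).2
        have hE := hends e heE
        rw [Sym2.eq_iff] at hh
        rcases hh with ⟨ha, hb⟩ | ⟨ha, hb⟩
        · exact huV (hcu _ hE.1 u ha hu).2.1
        · exact huV (hcu _ hE.2 u hb hu).2.1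
    intro k
    induction k using Sym2.ind with
    | _ a b =>
    by_cases ha : a = v
    · by_cases hb : b = v
      · subst ha; subst hb
        have hR : (t.E.filter (fun e => s((t.ends e).1, (t.ends e).2) = s(b, b))).card
          = loopsAt t b := by
          unfold loopsAt
          congr 1
          ext e
          simp only [Finset.mem_filter, Sym2.eq_iff, Prod.ext_iff]
          tauto
        rw [hR]
        have hsub : ((t'.E.erase e0).filter
            (fun e => s(c (t'.ends e).1, c (t'.ends e).2) = s(b, b))) ⊆
            (((t'.E.filter (fun e => t'.ends e = (v₁, v₂) ∨ t'.ends e = (v₂, v₁))).erase e0) ∪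
            (t'.E.filter (fun e => t'.ends e = (v₁, v₁)))) ∪
            (t'.E.filter (fun e => t'.ends e = (v₂, v₂))) := by
          intro e he
          simp only [Finset.mem_filter, Finset.mem_erase, Sym2.eq_iff] at he
          obtain ⟨⟨he1, heE⟩, hh⟩ := he
          have hE := hends e heE
          simp only [Finset.mem_union, Finset.mem_filter, Finset.mem_erase, Prod.ext_iff]
          have hh' : c (t'.ends e).1 = b ∧ c (t'.ends e).2 = b := hh.elim id id
          have h1 := hcv _ hE.1 hh'.1
          have h2 := hcv _ hE.2 hh'.2
          clear * - h1 h2 he1 heE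
          tauto
        have h1 := Finset.card_le_card hsub
        have h2 := Finset.card_union_le
          (((t'.E.filter (fun e => t'.ends e = (v₁, v₂) ∨ t'.ends e = (v₂, v₁))).erase e0) ∪
            (t'.E.filter (fun e => t'.ends e = (v₁, v₁))))
            (t'.E.filter (fun e => t'.ends e = (v₂, v₂)))
        have h3 := Finset.card_union_le
          ((t'.E.filter (fun e => t'.ends e = (v₁, v₂) ∨ t'.ends e = (v₂, v₁))).erase e0)
            (t'.E.filter (fun e => t'.ends e = (v₁, v₁)))
        have h4 := Finset.card_erase_add_one he0
        unfold multTo loopsAt at hloop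
        unfold loopsAt
        omega
      · subst ha
        have := hmix b hb
        rwa [Sym2.eq_swap] at this
    · by_cases hb : b = v
      · subst hb
        exact hmix a ha
      · apply Finset.card_le_card
        intro e he
        simp only [Finset.mem_filter, Finset.mem_erase, Sym2.eq_iff] at he ⊢
        obtain ⟨⟨_, heE⟩, hh⟩ := he
        have hE := hends e heE
        rcases hh with ⟨h1, h2⟩ | ⟨h1, h2⟩
        · have g1 := hcu _ hE.1 _ h1 ha
          have g2 := hcu _ hE.2 _ h2 hb
          obtain ⟨k1, k2, _⟩ := hold' e heE (by unfold incid; clear * - g1 g2; tauto)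
          rw [← k2]
          exact ⟨k1, Or.inl ⟨g1.1, g2.1⟩⟩
        · have g1 := hcu _ hE.1 _ h1 hb
          have g2 := hcu _ hE.2 _ h2 ha
          obtain ⟨k1, k2, _⟩ := hold' e heE (by unfold incid; clear * - g1 g2; tauto)
          rw [← k2]
          exact ⟨k1, Or.inr ⟨g1.1, g2.1⟩⟩
  obtain ⟨φ, hinj, hφ⟩ := hmatch
  have hset : ∀ S S' : Finset ℕ, S ⊆ t.V →
      S' = (if v ∈ S then insert v₁ (insert v₂ (S.erase v)) else S) → ∀ a ∈ S', c a ∈ S := by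
    intro S S' hS hS' a ha
    subst hS'
    split_ifs at ha with hvS
    · simp only [Finset.mem_insert] at ha
      rcases ha with rfl | rfl | ha
      · rwa [hc1]
      · rwa [hc2]
      · rw [hcne a (Finset.erase_subset_erase _ hS ha)]
        exact (Finset.mem_erase.mp ha).2
    · rw [hcne a (Finset.mem_erase.mpr ⟨by rintro rfl; exact hvS ha, hS ha⟩)]
      exact ha
  refine mw_of_map t t' p q c φ (t'.E.erase e0) hinj (fun e he => (hφ e he).1)
    (hset _ _ hwf.2.1 hA) (hset _ _ hwf.2.2 hB) ?_ h
  intro e he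
  by_cases hee : e = e0
  · left
    subst hee
    rcases he0'.2 with h | h <;> rw [h] <;> simp [hc1, hc2]
  · right
    have hm := Finset.mem_erase.mpr ⟨hee, he⟩
    exact ⟨hm, (hφ e hm).2⟩

lemma step_mw (t t' : Triple) (hwf : WF t) (p q : ℕ) (hs : Step t t')
    (h : MW p q (WW t') ∅ t'.E) : MW p q (WW t) ∅ t.E := by
  rcases hs with hs | hs | hs
  · obtain ⟨v, hv, hV, he, hE, hA, hB⟩ := hs
    refine mw_of_map t t' p q id id t'.E Function.injective_id.injOn
      (fun e h => ((hE e).mp h).1) ?_ ?_ (fun e h => Or.inr ⟨h, by simp [he]⟩) h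
    · intro a ha; rw [hA] at ha; exact Finset.mem_of_mem_erase ha
    · intro a ha; rw [hB] at ha; exact Finset.mem_of_mem_erase ha
  · obtain ⟨e, hee, hV, he, hE, hA, hB⟩ := hs
    refine mw_of_map t t' p q id id t'.E Function.injective_id.injOn
      (fun e h => ?_) ?_ ?_ (fun e h => Or.inr ⟨h, by simp [he]⟩) h
    · rw [hE] at h; exact Finset.mem_of_mem_erase h
    · intro a ha; rw [hA] at ha; exact ha
    · intro a ha; rw [hB] at ha; exact ha
  · exact sep_mw t t' hwf p q hs h

lemma step_wf (t t' : Triple) (hwf : WF t) (hs : Step t t') : WF t' := by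
  obtain ⟨w1, w2, w3⟩ := hwf
  rcases hs with hs | hs | hs
  · obtain ⟨v, hv, hV, he, hE, hA, hB⟩ := hs
    refine ⟨?_, ?_, ?_⟩
    · intro e h
      obtain ⟨h1, h2⟩ := (hE e).mp h
      have := w1 e h1
      unfold incid at h2
      rw [he, hV]
      simp only [Finset.mem_erase]
      tauto
    · rw [hA, hV]; exact Finset.erase_subset_erase _ w2
    · rw [hB, hV]; exact Finset.erase_subset_erase _ w3
  · obtain ⟨e, hee, hV, he, hE, hA, hB⟩ := hs
    refine ⟨?_, ?_, ?_⟩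
    · intro e h
      rw [hE] at h
      rw [he, hV]
      exact w1 e (Finset.mem_of_mem_erase h)
    · rw [hA, hV]; exact w2
    · rw [hB, hV]; exact w3
  · obtain ⟨v, v₁, v₂, hv, hne, hv1, hv2, hV, hold, hold', hends, hone, hloop, hmult, hA, hB⟩ := hs
    have hset : ∀ S S' : Finset ℕ, S ⊆ t.V →
        S' = (if v ∈ S then insert v₁ (insert v₂ (S.erase v)) else S) → S' ⊆ t'.V := by
      intro S S' hS hS' a ha
      subst hS'
      rw [hV]
      split_ifs at ha with hvS
      · simp only [Finset.mem_insert, Finset.mem_erase] at ha ⊢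
        have := @hS a
        tauto
      · have := hS ha
        simp only [Finset.mem_insert, Finset.mem_erase]
        have : a ≠ v := by rintro rfl; exact hvS ha
        tauto
    exact ⟨hends, hset _ _ w2 hA, hset _ _ w3 hB⟩

/-- **Monotonicity of the Shannon switching game.** Suppose the game-triple `t'` is
obtained from the (well-formed) game-triple `t` by a finite sequence of
vertex-deletions, edge-deletions and vertex-separations. Then, for all (positive)
`p, q`: (i) if Maker has a winning strategy for the `(p,q)`-Shannon switching game on
`t'`, then she also has one on `t`; and (ii) if Breaker has a winning strategy for the
`(p,q)`-Shannon switching game on `t`, then he also has one on `t'`. -/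
theorem shannon_monotonicity (t t' : Triple) (hwf : WF t)
    (hsteps : Relation.ReflTransGen Step t t') (p q : ℕ) (hp : 1 ≤ p) (hq : 1 ≤ q) :
    (MakerWins t' p q → MakerWins t p q) ∧
    (BreakerWins t p q → BreakerWins t' p q) := by
  apply mono_of_mw t t' p q hp
  have key : WF t' ∧ (MW p q (WW t') ∅ t'.E → MW p q (WW t) ∅ t.E) := by
    induction hsteps with
    | refl => exact ⟨hwf, id⟩
    | tail _ hs ih => exact ⟨step_wf _ _ ih.1 hs, fun h => ih.2 (step_mw _ _ ih.1 p q hs h)⟩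
  exact key.2

end ShannonMonotone
end
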